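/- arXiv:2207.11744 — 3 statements merged into one kernel-verified Lean document; each statement's English description precedes it below -/
import Mathlib

section
/- Let q = r^2 with r an odd prime power. Suppose q − 1 = e_1 f_1 = e_2 f_2, there exists an integer l ≥ 2 with e_1 ≡ 2^l (mod 2^{l+1}) and 2^l | e_2, and that 2e_2 | e_1(r−1) and e_1 | e_2(r+1). Let s, t be integers with 1 ≤ s ≤ D_1, 1 ≤ t ≤ D_2 and 4 | (s−1)(r+1), and set n_1 = s·f_1 + t·f_2. If n_1 is even, then there exists an MDS self-dual code over F_q of length n_1, i.e., a linear code C ⊆ F_q^{n_1} with C = C⊥, dim C = n_1/2, and minimum Hamming distance n_1/2 + 1. -/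
/-- The Euclidean dual of a linear code `C ⊆ F^n`. -/
def dualCode {F : Type*} [Field F] {n : ℕ} (C : Submodule F (Fin n → F)) :
    Submodule F (Fin n → F) where
  carrier := {x | ∀ c ∈ C, ∑ i, x i * c i = 0}
  add_mem' := by
    intro a b ha hb c hc
    simp only [Set.mem_setOf_eq] at ha hb ⊢
    simp [Pi.add_apply, add_mul, Finset.sum_add_distrib, ha c hc, hb c hc]
  zero_mem' := by intro c hc; simp
  smul_mem' := by
    intro r a ha c hc
    simp only [Set.mem_setOf_eq] at ha ⊢
    simp [Pi.smul_apply, smul_eq_mul, mul_assoc, ← Finset.mul_sum, ha c hc]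

/-- `C` has minimum Hamming distance `d`. -/
def IsMinDist {F : Type*} [Field F] [DecidableEq F] {n : ℕ}
    (C : Submodule F (Fin n → F)) (d : ℕ) : Prop :=
  (∀ c ∈ C, c ≠ 0 → d ≤ hammingNorm c) ∧ ∃ c ∈ C, c ≠ 0 ∧ hammingNorm c = d

open Polynomial in
theorem aux_grs {F : Type*} [Field F] [DecidableEq F] {n k : ℕ} (hn : n = 2 * k) (hk : 1 ≤ k)
    (a : Fin n → F) (ha : Function.Injective a)
    (hsq : ∀ i, IsSquare (∏ j ∈ Finset.univ.erase i, (a i - a j))) :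
    ∃ C : Submodule F (Fin n → F), dualCode C = C ∧ Module.finrank F C = k ∧
      IsMinDist C (k + 1) := by
  choose u hu using hsq
  have hu0 : ∀ i, u i ≠ 0 := by
    intro i h
    have := hu i
    rw [h, mul_zero, Finset.prod_eq_zero_iff] at this
    obtain ⟨j, hj, h0⟩ := this
    exact (Finset.mem_erase.1 hj).1 (ha (sub_eq_zero.1 h0)).symm
  let φ : F[X] →ₗ[F] (Fin n → F) :=
    { toFun := fun f i => (u i)⁻¹ * f.eval (a i)
      map_add' := by intro f g; ext i; simp [mul_add]
      map_smul' := by intro c f; ext i; simp; ring }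
  have hφ : ∀ f i, φ f i = (u i)⁻¹ * f.eval (a i) := fun f i => rfl
  have hzero : ∀ f : F[X], f ≠ 0 → f.degree < k → k + 1 ≤ hammingNorm (φ f) := by
    intro f hf hd
    have h1 : (Finset.univ.filter fun i => φ f i = 0).card ≤ f.natDegree := by
      calc _ = ((Finset.univ.filter fun i => φ f i = 0).image a).card :=
            (Finset.card_image_of_injective _ ha).symm
        _ ≤ f.roots.toFinset.card := by
            apply Finset.card_le_card
            intro x hx
            obtain ⟨i, hi, rfl⟩ := Finset.mem_image.1 hx
            have := (Finset.mem_filter.1 hi).2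
            rw [hφ] at this
            simpa [hf, hu0] using this
        _ ≤ f.roots.card := Multiset.toFinset_card_le _
        _ ≤ f.natDegree := card_roots' f
    have h2 := (natDegree_lt_iff_degree_lt hf).2 hd
    have h3 := Finset.card_filter_add_card_filter_not (s := (Finset.univ : Finset (Fin n))) (fun i => φ f i = 0)
    have h4 : hammingNorm (φ f) = (Finset.univ.filter fun i => ¬ φ f i = 0).card := rfl
    simp at h3
    omega
  let C := (degreeLT F k).map φ
  have hinj : ∀ f ∈ degreeLT F k, φ f = 0 → f = 0 := by
    intro f hf h0
    by_contra hne
    have := hzero f hne (mem_degreeLT.1 hf)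
    rw [h0] at this
    simp at this
  have hdim : Module.finrank F C = k := by
    have : Function.Injective (φ.domRestrict (degreeLT F k)) := by
      rw [injective_iff_map_eq_zero]
      rintro ⟨f, hf⟩ h
      exact Subtype.ext (hinj f hf h)
    have h2 := LinearMap.finrank_range_of_inj this
    rw [LinearMap.range_domRestrict] at h2
    rw [show Module.finrank F C = _ from h2, (degreeLTEquiv F k).finrank_eq]
    simp
  have hle : C ≤ dualCode C := by
    rintro _ ⟨f, hf, rfl⟩ _ ⟨g, hg, rfl⟩
    have hf := mem_degreeLT.1 hf
    have hg := mem_degreeLT.1 hg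
    have hd : (f * g).degree < ((n - 1 : ℕ) : WithBot ℕ) := by
      rcases eq_or_ne f 0 with rfl | hf0
      · simp
      rcases eq_or_ne g 0 with rfl | hg0
      · simp
      rw [← natDegree_lt_iff_degree_lt (mul_ne_zero hf0 hg0), natDegree_mul hf0 hg0]
      have := (natDegree_lt_iff_degree_lt hf0).2 hf
      have := (natDegree_lt_iff_degree_lt hg0).2 hg
      omega
    have := Lagrange.coeff_eq_sum (s := Finset.univ) (v := a) ha.injOn (P := f * g) (by
      rw [Finset.card_univ, Fintype.card_fin]
      refine hd.trans_le ?_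
      exact_mod_cast Nat.sub_le n 1)
    simp only [Finset.card_univ, Fintype.card_fin] at this
    rw [coeff_eq_zero_of_degree_lt hd] at this
    rw [this]
    refine Finset.sum_congr rfl fun i _ => ?_
    rw [hφ, hφ, hu, eval_mul]
    field_simp [hu0 i]
  have hdual : Module.finrank F (dualCode C) = n - k := by
    have hB : (Matrix.toBilin' (1 : Matrix (Fin n) (Fin n) F)).Nondegenerate :=
      LinearMap.BilinForm.nondegenerate_toBilin'_of_det_ne_zero' _ (by simp)
    have h := LinearMap.BilinForm.finrank_orthogonal hB C
    rw [hdim] at h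
    have : dualCode C = (Matrix.toBilin' (1 : Matrix (Fin n) (Fin n) F)).orthogonal C := by
      ext x
      rw [LinearMap.BilinForm.mem_orthogonal_iff]
      show (∀ c ∈ C, _) ↔ _
      refine forall₂_congr fun c _ => ?_
      rw [Matrix.toBilin'_apply']
      simp [dotProduct, mul_comm]
    rw [this, h]; simp
  refine ⟨C, (Submodule.eq_of_le_of_finrank_eq hle (by omega)).symm, hdim, ?_, ?_⟩
  · rintro _ ⟨f, hf, rfl⟩ h0
    exact hzero f (by rintro rfl; simp at h0) (mem_degreeLT.1 hf)
  · obtain ⟨T, -, hT⟩ := Finset.exists_subset_card_eq (s := (Finset.univ : Finset (Fin n))) (n := k - 1) (by simp; omega)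
    have hne : Lagrange.nodal T a ≠ 0 := Lagrange.nodal_ne_zero
    have hdeg : (Lagrange.nodal T a).degree < k := by
      rw [Lagrange.degree_nodal, hT]; exact_mod_cast (by omega)
    have hw := hzero _ hne hdeg
    refine ⟨φ (Lagrange.nodal T a), ⟨_, mem_degreeLT.2 hdeg, rfl⟩, ?_, le_antisymm ?_ hw⟩
    · intro h; rw [h] at hw; simp at hw
    · have : hammingNorm (φ (Lagrange.nodal T a)) ≤ Tᶜ.card := by
        apply Finset.card_le_card
        intro i hi
        rw [Finset.mem_compl]
        intro hiT
        apply (Finset.mem_filter.1 hi).2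
        rw [hφ, Lagrange.eval_nodal_at_node hiT, mul_zero]
      rw [Finset.card_compl, hT] at this
      simp at this
      omega

open Polynomial in
theorem aux_poly {F : Type*} [Field F] [DecidableEq F] {n : ℕ} (hn : Even n) (hn0 : 0 < n)
    (P : F[X]) (hm : P.Monic) (hs : P.Splits) (hd : P.natDegree = n)
    (hsq : ∀ x, P.eval x = 0 → P.derivative.eval x ≠ 0 ∧ IsSquare (P.derivative.eval x)) :
    ∃ C : Submodule F (Fin n → F), dualCode C = C ∧ Module.finrank F C = n / 2 ∧
      IsMinDist C (n / 2 + 1) := by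
  have hnd : P.roots.Nodup := by
    rw [Multiset.nodup_iff_count_le_one]
    intro x
    rw [count_roots]
    by_contra h
    push Not at h
    rw [one_lt_rootMultiplicity_iff_isRoot hm.ne_zero] at h
    exact (hsq x h.1).1 h.2
  have hcard : P.roots.toFinset.card = n := by
    rw [Multiset.toFinset_card_of_nodup hnd, ← hs.natDegree_eq_card_roots, hd]
  let e := P.roots.toFinset.equivFinOfCardEq hcard
  let a : Fin n → F := fun i => (e.symm i : F)
  have ha : Function.Injective a := Subtype.val_injective.comp e.symm.injective
  have himg : Finset.univ.image a = P.roots.toFinset := by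
    ext x
    simp only [Finset.mem_image, Finset.mem_univ, true_and]
    constructor
    · rintro ⟨i, rfl⟩; exact (e.symm i).2
    · intro hx; exact ⟨e ⟨x, hx⟩, by simp [a]⟩
  have hP : P = Lagrange.nodal Finset.univ a := by
    have h1 : Lagrange.nodal P.roots.toFinset id = P := by
      conv_rhs => rw [hs.eq_prod_roots_of_monic hm]
      rw [Lagrange.nodal, Finset.prod, Multiset.toFinset_val, hnd.dedup]
      rfl
    rw [← h1, ← himg, Lagrange.nodal, Lagrange.nodal, Finset.prod_image ha.injOn]
    rfl
  obtain ⟨k, hk⟩ := hn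
  have : n / 2 = k := by omega
  rw [this]
  refine aux_grs (by omega) (by omega) a ha fun i => ?_
  have h := (hsq (a i) (by rw [hP]; exact Lagrange.eval_nodal_at_node (Finset.mem_univ i))).2
  rwa [hP, Lagrange.eval_nodal_derivative_eval_node_eq (Finset.mem_univ i), Lagrange.eval_nodal] at h

open Polynomial in
theorem aux_splits {F : Type*} [Field F] [Fintype F] [DecidableEq F] {f e : ℕ}
    (hM : f * e + 1 = Fintype.card F) (x : F) (hx : x ^ e = 1) :
    (X ^ f - C x : F[X]).Splits := by
  have h1 : (X ^ Fintype.card F - X : F[X]).Splits := by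
    rw [splits_iff_card_roots, FiniteField.roots_X_pow_card_sub_X,
      FiniteField.X_pow_card_sub_X_natDegree_eq F Fintype.one_lt_card]
    rfl
  refine h1.of_dvd (FiniteField.X_pow_card_sub_X_ne_zero F Fintype.one_lt_card) ?_
  have h2 : (X ^ f - C x : F[X]) ∣ (X ^ f) ^ e - (C x) ^ e := sub_dvd_pow_sub_pow _ _ _
  rw [← C_pow, hx, ← pow_mul] at h2
  rw [← hM]
  refine h2.trans ⟨X, ?_⟩
  simp; ring

open Polynomial in
theorem aux_deriv {F : Type*} [Field F] (f : ℕ) (x a : F) (Q : F[X]) (h : a ^ f = x) :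
    (derivative ((X ^ f - C x) * Q)).eval a = f * a ^ (f - 1) * Q.eval a := by
  simp [derivative_mul, h, derivative_X_pow]

theorem aux_frob {F : Type*} [Field F] [Fintype F] {r : ℕ} (hr_pp : IsPrimePow r)
    (hF : Fintype.card F = r ^ 2) (x y : F) : (x - y) ^ r = x ^ r - y ^ r := by
  obtain ⟨p, k, hp, hk, rfl⟩ := hr_pp
  have hp' := hp.nat_prime
  have : Fact p.Prime := ⟨hp'⟩
  have : CharP F p := by
    obtain ⟨p', hc⟩ := CharP.exists F
    obtain ⟨m, hpm, hcard⟩ := FiniteField.card F p'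
    rw [hF, ← pow_mul] at hcard
    have : p' ∣ p ^ (k * 2) := by rw [hcard]; exact dvd_pow_self _ m.ne_zero
    have := (Nat.prime_dvd_prime_iff_eq hpm hp').1 (hpm.dvd_of_dvd_pow this)
    rwa [← this]
  exact sub_pow_char_pow x y k

open Polynomial in
theorem aux_field {F : Type*} [Field F] [Fintype F] [DecidableEq F]
    (r s t c d1 d2 h1 h2 f1 f2 : ℕ)
    (hr_pp : IsPrimePow r) (hF : Fintype.card F = r ^ 2)
    (hrp : r + 1 = 2 * (d1 * h1)) (hrm : r - 1 = 2 * (d2 * h2)) (hr1 : 1 < r)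
    (hcop : Nat.Coprime d1 d2) (hd1 : Odd d1) (hc : Even c)
    (hM1 : r ^ 2 = f1 * (2 * c * d1) + 1) (hM2 : r ^ 2 = f2 * (2 * c * d2) + 1)
    (hcf2 : c * f2 = h2 * (r + 1))
    (hs1 : 1 ≤ s) (hs : s ≤ d1) (ht : t ≤ d2) (h4 : 4 ∣ (s - 1) * (r + 1))
    (hev : Even (s * f1 + t * f2)) :
    ∃ C : Submodule F (Fin (s * f1 + t * f2) → F), dualCode C = C ∧
      Module.finrank F C = (s * f1 + t * f2) / 2 ∧
      IsMinDist C ((s * f1 + t * f2) / 2 + 1) := by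
  have hpos : 0 < f1 * (2 * c * d1) := by
    have : 1 < r ^ 2 := Nat.one_lt_pow (by norm_num) hr1
    omega
  have hpos2 : 0 < f2 * (2 * c * d2) := by omega
  have hf1 : 0 < f1 := Nat.pos_of_ne_zero (by rintro rfl; simp at hpos)
  have hf2 : 0 < f2 := Nat.pos_of_ne_zero (by rintro rfl; simp at hpos2)
  have hc0 : 0 < c := Nat.pos_of_ne_zero (by rintro rfl; simp at hpos)
  have hd10 : 0 < d1 := by omega
  have hd20 : 0 < d2 := Nat.pos_of_ne_zero (by rintro rfl; simp at hpos2)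
  obtain ⟨h, hh⟩ : ∃ h, h = d1 * h1 := ⟨_, rfl⟩
  rw [← hh] at hrp
  have hMr : r ^ 2 = (r - 1) * (r + 1) + 1 := by
    obtain ⟨r', rfl⟩ : ∃ r', r = r' + 1 := ⟨r - 1, by omega⟩
    simp; ring
  have hM1' : (r - 1) * (r + 1) = f1 * (2 * c * d1) := by omega
  have hM2' : (r - 1) * (r + 1) = f2 * (2 * c * d2) := by omega
  have frob := aux_frob (F := F) hr_pp hF
  have rodd : Odd r := ⟨h - 1, by omega⟩
  have hchar : ringChar F ≠ 2 := by
    intro h2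
    have := FiniteField.even_card_iff_char_two.1 h2
    rw [hF] at this
    have h3 : Odd (r ^ 2) := rodd.pow
    rw [Nat.odd_iff] at h3
    omega
  have hhalf : Fintype.card F / 2 = (r - 1) * h := by
    rw [hF, hMr, hrp, show (r - 1) * (2 * h) = 2 * ((r - 1) * h) by ring]; omega
  have crit : ∀ z : F, z ≠ 0 → z ^ ((r - 1) * h) = 1 → IsSquare z := by
    intro z hz h
    rw [FiniteField.isSquare_iff hchar hz, hhalf, h]
  have sub1 : ∀ z : F, z ^ r = z → IsSquare z := by
    intro z h
    rcases eq_or_ne z 0 with rfl | hz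
    · exact IsSquare.zero
    refine crit z hz ?_
    have : z ^ (r - 1) = 1 := by
      apply mul_right_cancel₀ hz
      rw [← pow_succ, Nat.sub_add_cancel hr1.le, h, one_mul]
    rw [pow_mul, this, one_pow]
  have sub2 : ∀ u w α : F, u ^ h = α → w ^ h = 1 → α * α = 1 → u ≠ w →
      (u - w) ^ ((r - 1) * h) = (-1) ^ h * α := by
    intro u w α hu hw hα huw
    have hu1 : u ^ r * u = 1 := by rw [← pow_succ, hrp, mul_comm, pow_mul, hu, sq, hα]
    have hw1 : w ^ r * w = 1 := by rw [← pow_succ, hrp, mul_comm, pow_mul, hw, one_pow]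
    have hu0 : u ≠ 0 := by rintro rfl; simp at hu1
    have hw0 : w ≠ 0 := by rintro rfl; simp at hw1
    have key : (u - w) ^ (r - 1) * (u * w) = -1 := by
      apply mul_right_cancel₀ (sub_ne_zero.2 huw)
      calc (u - w) ^ (r - 1) * (u * w) * (u - w) = (u - w) ^ (r - 1 + 1) * (u * w) := by ring
        _ = (u ^ r - w ^ r) * (u * w) := by rw [Nat.sub_add_cancel hr1.le, frob]
        _ = (u ^ r * u) * w - (w ^ r * w) * u := by ring
        _ = _ := by rw [hu1, hw1]; ring
    have k2 := congrArg (· ^ h) key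
    simp only [mul_pow, hu, hw, ← pow_mul] at k2
    rw [← k2]
    linear_combination (-(u - w) ^ ((r - 1) * h)) * hα
  -- generator
  obtain ⟨θ', hθ'⟩ := IsCyclic.exists_monoid_generator (α := Fˣ)
  have hord' : orderOf θ' = (r - 1) * (r + 1) := by
    rw [orderOf_eq_card_of_forall_mem_powers hθ', Nat.card_units, Nat.card_eq_fintype_card, hF]
    omega
  obtain ⟨θ, hθ⟩ : ∃ θ : F, θ = (θ' : F) := ⟨_, rfl⟩
  have hθ0 : θ ≠ 0 := by rw [hθ]; exact θ'.ne_zero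
  have gen : ∀ x : F, x ≠ 0 → ∃ m : ℕ, x = θ ^ m := by
    intro x hx
    obtain ⟨m, hm⟩ := hθ' (Units.mk0 x hx)
    refine ⟨m, ?_⟩
    have := congrArg (fun u : Fˣ => (u : F)) hm
    simpa [hθ] using this.symm
  have pw : ∀ m n : ℕ, θ ^ m = θ ^ n → m ≡ n [MOD (r - 1) * (r + 1)] := by
    intro m n hmn
    rw [← hord', ← pow_eq_pow_iff_modEq]
    ext
    simpa [hθ] using hmn
  have pM : θ ^ ((r - 1) * (r + 1)) = 1 := by
    rw [← hord', hθ, ← Units.val_pow_eq_pow_val, pow_orderOf_eq_one]; simp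
  have pM1 : ∀ k, θ ^ ((r - 1) * (r + 1) * k) = 1 := by
    intro k; rw [pow_mul, pM, one_pow]
  have pHalf : θ ^ (f1 * (c * d1)) = -1 := by
    have h2 : (θ ^ (f1 * (c * d1)) - 1) * (θ ^ (f1 * (c * d1)) + 1) = 0 := by
      have : θ ^ (f1 * (c * d1)) * θ ^ (f1 * (c * d1)) = 1 := by
        rw [← pow_add, ← pM, hM1']; congr 1; ring
      linear_combination this
    rcases mul_eq_zero.1 h2 with h3 | h3
    · exfalso
      have h4 : θ ^ (f1 * (c * d1)) = θ ^ 0 := by rw [pow_zero]; exact sub_eq_zero.1 h3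
      have h5 := (Nat.modEq_zero_iff_dvd.1 (pw _ _ h4))
      have h6 := Nat.le_of_dvd (by positivity) h5
      rw [hM1'] at h6
      have h7 : 0 < f1 * (c * d1) := by positivity
      nlinarith
    · exact eq_neg_of_add_eq_zero_left h3
  obtain ⟨x, hx⟩ : ∃ x : ℕ → F, ∀ i, x i = θ ^ (2 * c * d2 * i * f1) := ⟨_, fun _ => rfl⟩
  obtain ⟨y, hy⟩ : ∃ y : ℕ → F, ∀ j, y j = θ ^ ((c + 2 * c * d1 * j) * f2) := ⟨_, fun _ => rfl⟩
  have HA : ∀ a i, a ^ f1 = x i → ∃ z, a = θ ^ (2 * c * z) := by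
    intro a i ha
    have ha0 : a ≠ 0 := by
      rintro rfl
      rw [zero_pow hf1.ne', hx] at ha
      exact pow_ne_zero _ hθ0 ha.symm
    obtain ⟨m, rfl⟩ := gen a ha0
    rw [hx, ← pow_mul] at ha
    have h := pw _ _ ha
    rw [hM1', mul_comm f1] at h
    have h := Nat.ModEq.mul_right_cancel' hf1.ne' h
    have h := h.of_dvd (Dvd.intro d1 rfl : 2 * c ∣ 2 * c * d1)
    have h0 : 2 * c * d2 * i ≡ 0 [MOD 2 * c] := Nat.modEq_zero_iff_dvd.2 ⟨d2 * i, by ring⟩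
    obtain ⟨z, hz⟩ := Nat.modEq_zero_iff_dvd.1 (h.trans h0)
    exact ⟨z, by rw [hz]⟩
  have HB : ∀ b j, b ^ f2 = y j → ∃ z, b = θ ^ (c * (2 * z + 1)) := by
    intro b j hb
    have hb0 : b ≠ 0 := by
      rintro rfl
      rw [zero_pow hf2.ne', hy] at hb
      exact pow_ne_zero _ hθ0 hb.symm
    obtain ⟨m, rfl⟩ := gen b hb0
    rw [hy, ← pow_mul] at hb
    have h := pw _ _ hb
    rw [hM2', mul_comm f2] at h
    have h := Nat.ModEq.mul_right_cancel' hf2.ne' h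
    have h := h.of_dvd (Dvd.intro d2 rfl : 2 * c ∣ 2 * c * d2)
    have h0 : c + 2 * c * d1 * j ≡ c [MOD 2 * c] := by
      have : 2 * c * d1 * j ≡ 0 [MOD 2 * c] := Nat.modEq_zero_iff_dvd.2 ⟨d1 * j, by ring⟩
      exact this.add_left c
    have h := h.trans h0
    refine ⟨m / (2 * c), ?_⟩
    have h9 : m % (2 * c) = c := by
      rw [h]; exact Nat.mod_eq_of_lt (by omega)
    congr 1
    have := Nat.div_add_mod m (2 * c)
    rw [h9] at this
    linarith
  have HAB : ∀ z z', θ ^ (2 * c * z) ≠ θ ^ (c * (2 * z' + 1)) := by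
    intro z z' h
    have h := pw _ _ h
    rw [hM1'] at h
    have h := h.of_dvd (⟨f1 * d1, by ring⟩ : c * 2 ∣ f1 * (2 * c * d1))
    have e : 2 * c * z = c * (2 * z) := by ring
    rw [e] at h
    have h := Nat.ModEq.mul_left_cancel' hc0.ne' h
    unfold Nat.ModEq at h
    omega
  have xinj : ∀ i < s, ∀ j < s, x i = x j → i = j := by
    intro i hi j hj h
    rw [hx, hx] at h
    have h := pw _ _ h
    rw [hM1', mul_comm f1] at h
    have h := Nat.ModEq.mul_right_cancel' hf1.ne' h
    rw [mul_assoc _ d2 i, mul_assoc _ d2 j] at h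
    have h := Nat.ModEq.mul_left_cancel' (c := 2 * c) (by positivity) h
    have h := Nat.ModEq.cancel_left_of_coprime hcop h
    exact Nat.ModEq.eq_of_lt_of_lt h (by omega) (by omega)
  have yinj : ∀ i < t, ∀ j < t, y i = y j → i = j := by
    intro i hi j hj h
    rw [hy, hy] at h
    have h := pw _ _ h
    rw [hM2', mul_comm f2] at h
    have h := Nat.ModEq.mul_right_cancel' hf2.ne' h
    have h := Nat.ModEq.add_left_cancel' _ h
    rw [mul_assoc _ d1 i, mul_assoc _ d1 j] at h
    have h := Nat.ModEq.mul_left_cancel' (c := 2 * c) (by positivity) h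
    have h := Nat.ModEq.cancel_left_of_coprime hcop.symm h
    exact Nat.ModEq.eq_of_lt_of_lt h (by omega) (by omega)
  have fixr : ∀ m, (θ ^ (m * (r + 1))) ^ r = θ ^ (m * (r + 1)) := by
    intro m
    rw [← pow_mul]
    have : m * (r + 1) * r = (r - 1) * (r + 1) * m + m * (r + 1) := by
      obtain ⟨r', rfl⟩ : ∃ r', r = r' + 1 := ⟨r - 1, by omega⟩
      simp; ring
    rw [this, pow_add, pM1, one_mul]
  have yfix : ∀ j, y j ^ r = y j := by
    intro j
    have : (c + 2 * c * d1 * j) * f2 = (h2 * (1 + 2 * d1 * j)) * (r + 1) := by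
      calc _ = (c * f2) * (1 + 2 * d1 * j) := by ring
        _ = _ := by rw [hcf2]; ring
    rw [hy, this, fixr]
  have xh : ∀ i, x i ^ h = 1 := by
    intro i
    rw [hx, ← pow_mul, ← pM1 (d2 * i * h1), hM1', hh]
    congr 1; ring
  have natsq : ∀ f : ℕ, IsSquare (f : F) := by
    intro f
    apply sub1
    induction f with
    | zero => simp; omega
    | succ n ih =>
      have := frob (n : F) (-1)
      rw [rodd.neg_pow, one_pow, ih] at this
      push_cast
      linear_combination this
  have cast0 : ((r ^ 2 : ℕ) : F) = 0 := by
    rw [← hF]; simp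
  have f10 : (f1 : F) ≠ 0 := by
    intro h
    rw [hM1] at cast0
    push_cast at cast0
    rw [h] at cast0
    simp at cast0
  have f20 : (f2 : F) ≠ 0 := by
    intro h
    rw [hM2] at cast0
    push_cast at cast0
    rw [h] at cast0
    simp at cast0
  have goodprod : ∀ (S : Finset ℕ) (w : ℕ → F), (∀ i ∈ S, IsSquare (w i)) → IsSquare (∏ i ∈ S, w i) :=
    fun S w h => Finset.isSquare_prod w h
  -- the polynomial
  let A : ℕ → F[X] := fun i => X ^ f1 - C (x i)
  let B : ℕ → F[X] := fun j => X ^ f2 - C (y j)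
  have hAm : ∀ i, (A i).Monic := fun i => monic_X_pow_sub_C _ hf1.ne'
  have hBm : ∀ i, (B i).Monic := fun i => monic_X_pow_sub_C _ hf2.ne'
  have hAe : ∀ i a, (A i).eval a = a ^ f1 - x i := fun i a => by simp [A]
  have hBe : ∀ i a, (B i).eval a = a ^ f2 - y i := fun i a => by simp [B]
  have hPA : (∏ i ∈ Finset.range s, A i).Monic := monic_prod_of_monic _ _ fun i _ => hAm i
  have hPB : (∏ i ∈ Finset.range t, B i).Monic := monic_prod_of_monic _ _ fun i _ => hBm i
  refine aux_poly hev (by positivity) ((∏ i ∈ Finset.range s, A i) * ∏ j ∈ Finset.range t, B j)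
    (hPA.mul hPB) ?_ ?_ ?_
  · refine Splits.mul (Splits.prod fun i _ => ?_) (Splits.prod fun j _ => ?_)
    · refine aux_splits (e := 2 * c * d1) (by omega) _ ?_
      rw [hx, ← pow_mul, ← pM1 (2 * c * d2 * i), hM1']
      congr 1; ring
    · refine aux_splits (e := 2 * c * d2) (by omega) _ ?_
      rw [hy, ← pow_mul, ← pM1 (c + 2 * c * d1 * j), hM2']
      congr 1; ring
  · rw [hPA.natDegree_mul hPB, natDegree_prod_of_monic _ _ fun i _ => hAm i,
      natDegree_prod_of_monic _ _ fun i _ => hBm i]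
    simp [A, B]
  · intro a ha
    rw [eval_mul, mul_eq_zero, eval_prod, eval_prod, Finset.prod_eq_zero_iff,
      Finset.prod_eq_zero_iff] at ha
    rcases ha with ⟨i, hi, ha⟩ | ⟨j, hj, ha⟩
    · rw [hAe, sub_eq_zero] at ha
      rw [← Finset.mul_prod_erase _ _ hi, mul_assoc, aux_deriv _ _ _ _ ha, eval_mul, eval_prod,
        eval_prod]
      simp only [hAe, hBe, ha]
      obtain ⟨z, rfl⟩ := HA a i ha
      have n1 : ∀ j ∈ (Finset.range s).erase i, x i - x j ≠ 0 := by
        intro j hj h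
        rw [Finset.mem_erase, Finset.mem_range] at hj
        exact hj.1 (xinj i (Finset.mem_range.1 hi) j hj.2 (sub_eq_zero.1 h)).symm
      have n2 : ∀ j ∈ Finset.range t, (θ ^ (2 * c * z)) ^ f2 - y j ≠ 0 := by
        intro j hj h
        obtain ⟨z', hz'⟩ := HB _ _ (sub_eq_zero.1 h)
        exact HAB _ _ hz'
      refine ⟨mul_ne_zero (mul_ne_zero f10 (pow_ne_zero _ (pow_ne_zero _ hθ0)))
        (mul_ne_zero (Finset.prod_ne_zero_iff.2 n1) (Finset.prod_ne_zero_iff.2 n2)),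
        ((natsq f1).mul ?_).mul (IsSquare.mul ?_ ?_)⟩
      · exact IsSquare.pow _ ⟨θ ^ (c * z), by rw [← pow_add]; congr 1; ring⟩
      · refine crit _ (Finset.prod_ne_zero_iff.2 n1) ?_
        rw [← Finset.prod_pow]
        rw [Finset.prod_congr rfl fun j hj => sub2 (x i) (x j) 1 (xh i) (xh j) (one_mul 1)
          (sub_ne_zero.1 (n1 j hj))]
        rw [Finset.prod_const, Finset.card_erase_of_mem hi, Finset.card_range, mul_one, ← pow_mul]
        apply Even.neg_one_pow
        obtain ⟨k, hk⟩ := h4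
        rw [hrp] at hk
        exact ⟨k, by linarith⟩
      · refine goodprod _ _ fun j hj => sub1 _ ?_
        rw [frob, yfix]
        congr 1
        have : (θ ^ (2 * c * z)) ^ f2 = θ ^ ((2 * z * h2) * (r + 1)) := by
          rw [← pow_mul]
          congr 1
          calc _ = 2 * z * (c * f2) := by ring
            _ = _ := by rw [hcf2]; ring
        rw [this, fixr]
    · rw [hBe, sub_eq_zero] at ha
      rw [mul_comm, ← Finset.mul_prod_erase _ _ hj, mul_assoc, aux_deriv _ _ _ _ ha, eval_mul,
        eval_prod, eval_prod]
      simp only [hAe, hBe, ha]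
      obtain ⟨z, rfl⟩ := HB a j ha
      have n1 : ∀ i ∈ (Finset.range t).erase j, y j - y i ≠ 0 := by
        intro i hi h
        rw [Finset.mem_erase, Finset.mem_range] at hi
        exact hi.1 (yinj j (Finset.mem_range.1 hj) i hi.2 (sub_eq_zero.1 h)).symm
      have n2 : ∀ i ∈ Finset.range s, (θ ^ (c * (2 * z + 1))) ^ f1 - x i ≠ 0 := by
        intro i hi h
        obtain ⟨z', hz'⟩ := HA _ _ (sub_eq_zero.1 h)
        exact HAB _ _ hz'.symm
      refine ⟨mul_ne_zero (mul_ne_zero f20 (pow_ne_zero _ (pow_ne_zero _ hθ0)))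
        (mul_ne_zero (Finset.prod_ne_zero_iff.2 n1) (Finset.prod_ne_zero_iff.2 n2)),
        ((natsq f2).mul ?_).mul (IsSquare.mul ?_ ?_)⟩
      · obtain ⟨c', rfl⟩ := hc
        exact IsSquare.pow _ ⟨θ ^ (c' * (2 * z + 1)), by rw [← pow_add]; congr 1; ring⟩
      · refine goodprod _ _ fun i hi => sub1 _ ?_
        rw [frob, yfix, yfix]
      · refine goodprod _ _ fun i hi => crit _ (n2 i hi) ?_
        have hα : ((-1 : F) ^ h) * (-1) ^ h = 1 := by rw [← mul_pow]; simp
        rw [sub2 _ (x i) ((-1) ^ h) ?_ (xh i) hα (sub_ne_zero.1 (n2 i hi)), hα]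
        rw [← pow_mul, ← pow_mul]
        have : c * (2 * z + 1) * (f1 * h) = f1 * (c * d1) * (h1 * (2 * z + 1)) := by rw [hh]; ring
        rw [this, pow_mul, pHalf, mul_comm, pow_mul, Odd.neg_one_pow ⟨z, rfl⟩, hh, pow_mul,
          hd1.neg_one_pow]

/-- Theorem 3.2(1): if `n₁ = s·f₁ + t·f₂` is even, there is a `q`-ary MDS self-dual code
of length `n₁`, where `q = r²`. -/
theorem mds_self_dual_of_even_length
    (r e1 f1 e2 f2 s t l : ℕ)
    (hr_odd : Odd r) (hr_pp : IsPrimePow r)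
    (hq1 : r ^ 2 - 1 = e1 * f1) (hq2 : r ^ 2 - 1 = e2 * f2)
    (hl : 2 ≤ l) (he1 : e1 % 2 ^ (l + 1) = 2 ^ l) (he2 : 2 ^ l ∣ e2)
    (hdvd1 : 2 * e2 ∣ e1 * (r - 1)) (hdvd2 : e1 ∣ e2 * (r + 1))
    (hs1 : 1 ≤ s) (hs2 : s ≤ e1 / Nat.gcd e1 e2)
    (ht1 : 1 ≤ t) (ht2 : t ≤ e2 / Nat.gcd e1 e2)
    (h4 : 4 ∣ (s - 1) * (r + 1))
    (hn1 : Even (s * f1 + t * f2))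
    (F : Type*) [Field F] [Fintype F] [DecidableEq F]
    (hF : Fintype.card F = r ^ 2) :
    ∃ C : Submodule F (Fin (s * f1 + t * f2) → F),
      dualCode C = C ∧
      Module.finrank F C = (s * f1 + t * f2) / 2 ∧
      IsMinDist C ((s * f1 + t * f2) / 2 + 1) := by
  obtain ⟨g, hg⟩ : ∃ g, g = Nat.gcd e1 e2 := ⟨_, rfl⟩
  rw [← hg] at hs2 ht2
  have hr1 : 1 < r := hr_pp.one_lt
  have hr2 : 1 < r ^ 2 := Nat.one_lt_pow (by norm_num) hr1
  have he1pos : 0 < e1 := Nat.pos_of_ne_zero (by rintro rfl; omega)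
  have hgpos : 0 < g := by rw [hg]; exact Nat.gcd_pos_of_pos_left _ he1pos
  obtain ⟨d1, hd1⟩ : g ∣ e1 := hg ▸ Nat.gcd_dvd_left _ _
  obtain ⟨d2, hd2⟩ : g ∣ e2 := hg ▸ Nat.gcd_dvd_right _ _
  have hcop : Nat.Coprime d1 d2 := by
    have h := Nat.gcd_mul_left g d1 d2
    rw [← hd1, ← hd2, ← hg] at h
    exact (Nat.eq_of_mul_eq_mul_left hgpos (by rw [mul_one]; exact h)).symm
  have hle1 : 2 ^ l ∣ e1 := by
    rw [← Nat.mod_add_div e1 (2 ^ (l + 1)), he1]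
    exact (dvd_refl _).add ((pow_dvd_pow 2 (Nat.le_succ l)).mul_right _)
  have hlg : 2 ^ l ∣ g := by rw [hg]; exact Nat.dvd_gcd hle1 he2
  have hd1odd : Odd d1 := by
    rw [← Nat.not_even_iff_odd]
    intro hev
    have : 2 ^ (l + 1) ∣ e1 := by
      rw [hd1, pow_succ]
      exact Nat.mul_dvd_mul hlg hev.two_dvd
    rw [Nat.mod_eq_zero_of_dvd this] at he1
    exact (pow_pos (by norm_num : 0 < 2) l).ne he1
  have h4g : 4 ∣ g := (pow_dvd_pow 2 hl : 2 ^ 2 ∣ 2 ^ l).trans hlg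
  obtain ⟨c', hc'⟩ := h4g
  obtain ⟨k, hk⟩ := hr_odd
  have hA : d1 ∣ k + 1 := by
    have h : g * d1 ∣ g * (d2 * (r + 1)) := by
      rw [← mul_assoc, ← hd1, ← hd2]; exact hdvd2
    have h := hcop.dvd_of_dvd_mul_left (Nat.dvd_of_mul_dvd_mul_left hgpos h)
    rw [show r + 1 = 2 * (k + 1) by omega] at h
    exact (Nat.coprime_two_right.2 hd1odd).dvd_of_dvd_mul_left h
  have hB : d2 ∣ k := by
    have h : (2 * g) * d2 ∣ (2 * g) * (d1 * k) := by
      have e : 2 * g * (d1 * k) = e1 * (r - 1) := by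
        rw [hd1, show r - 1 = 2 * k by omega]; ring
      rw [e, mul_assoc, ← hd2]; exact hdvd1
    exact hcop.symm.dvd_of_dvd_mul_left (Nat.dvd_of_mul_dvd_mul_left (by omega) h)
  obtain ⟨h1, hh1⟩ := hA
  obtain ⟨h2, hh2⟩ := hB
  have hd1d : e1 / g = d1 := by rw [hd1]; exact Nat.mul_div_cancel_left _ hgpos
  have hd2d : e2 / g = d2 := by rw [hd2]; exact Nat.mul_div_cancel_left _ hgpos
  rw [hd1d] at hs2
  rw [hd2d] at ht2
  have hM1 : r ^ 2 = f1 * (2 * (2 * c') * d1) + 1 := by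
    have : e1 * f1 = f1 * (2 * (2 * c') * d1) := by rw [hd1, hc']; ring
    omega
  have hM2 : r ^ 2 = f2 * (2 * (2 * c') * d2) + 1 := by
    have : e2 * f2 = f2 * (2 * (2 * c') * d2) := by rw [hd2, hc']; ring
    omega
  have hd20 : 0 < d2 := by omega
  refine aux_field r s t (2 * c') d1 d2 h1 h2 f1 f2 hr_pp hF (by omega) (by omega) hr1 hcop hd1odd
    (even_two_mul c') hM1 hM2 ?_ hs1 hs2 ht2 h4 hn1
  apply Nat.eq_of_mul_eq_mul_left (show 0 < 2 * d2 by omega)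
  have e3 : r ^ 2 = 2 * k * (r + 1) + 1 := by rw [hk]; ring
  calc 2 * d2 * (2 * c' * f2) = f2 * (2 * (2 * c') * d2) := by ring
    _ = 2 * k * (r + 1) := by omega
    _ = 2 * d2 * (h2 * (r + 1)) := by rw [hh2]; ring
end

section
/- Let q = r^2 with r an odd prime power. Suppose q − 1 = e_1 f_1 = e_2 f_2, there exists an integer l ≥ 2 with e_1 ≡ 2^l (mod 2^{l+1}) and 2^l | e_2, and that 2e_2 | e_1(r−1) and e_1 | e_2(r+1). Let s, t be integers with 1 ≤ s ≤ D_1, 1 ≤ t ≤ D_2 and 4 | (s−1)(r+1), and set n_1 = s·f_1 + t·f_2. If n_1 is odd, then there exists an MDS self-dual code over F_q of length n_1 + 1, i.e., a linear code C ⊆ F_q^{n_1+1} with C = C⊥, dim C = (n_1+1)/2, and minimum Hamming distance (n_1+1)/2 + 1. -/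
open Polynomial in
/-- encoding map -/
noncomputable def encMap {F : Type*} [Field F] {n : ℕ} (k : ℕ) (α v : Fin n → F) :
    F[X] →ₗ[F] (Fin (n + 1) → F) where
  toFun f := Fin.snoc (α := fun _ => F) (fun i => v i * f.eval (α i)) (f.coeff (k - 1))
  map_add' f g := by
    ext i
    refine Fin.lastCases ?_ (fun i => ?_) i <;> simp [mul_add]
  map_smul' c f := by
    ext i
    refine Fin.lastCases ?_ (fun i => ?_) i <;> simp [mul_left_comm]

lemma finrank_dualCode {F : Type*} [Field F] {n : ℕ} (C : Submodule F (Fin n → F)) :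
    Module.finrank F (dualCode C) = n - Module.finrank F C := by
  have hB : (Matrix.toBilin' (1 : Matrix (Fin n) (Fin n) F)).Nondegenerate :=
    Matrix.Nondegenerate.toBilin' (Matrix.nondegenerate_of_det_ne_zero (by simp))
  have h := LinearMap.BilinForm.finrank_orthogonal hB C
  have e : (Matrix.toBilin' (1 : Matrix (Fin n) (Fin n) F)).orthogonal C = dualCode C := by
    ext x
    simp only [LinearMap.BilinForm.mem_orthogonal_iff, 
      Matrix.toBilin'_apply', Matrix.one_mulVec, dotProduct]
    constructor
    · intro H c hc
      rw [← H c hc]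
      exact Finset.sum_congr rfl fun i _ => mul_comm _ _
    · intro H c hc
      rw [← H c hc]
      exact Finset.sum_congr rfl fun i _ => mul_comm _ _
  rw [e] at h
  simpa using h

open Polynomial in
lemma code_of_points {F : Type*} [Field F] [DecidableEq F] {n k : ℕ} (hk : n + 1 = 2 * k)
    (α v : Fin n → F) (hα : Function.Injective α) 
    (hv : ∀ i, v i ^ 2 * ∏ j ∈ Finset.univ.erase i, (α i - α j) = -1) :
    ∃ C : Submodule F (Fin (n + 1) → F),
      dualCode C = C ∧ Module.finrank F C = k ∧ IsMinDist C (k + 1) := by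
  classical
  have hk0 : 1 ≤ k := by omega
  have hv0 : ∀ i, v i ≠ 0 := by
    intro i h
    have := hv i
    simp [h] at this
  have hzero : ∀ f : F[X], f ≠ 0 → f.degree < (k : ℕ) →
      k + 1 ≤ hammingNorm (encMap k α v f) := by
    intro f hf hdeg
    have hnd : f.natDegree < k := (natDegree_lt_iff_degree_lt hf).2 hdeg
    have h1 : (Finset.univ.filter fun i : Fin n => f.eval (α i) = 0).card ≤ f.natDegree := by
      rw [← Finset.card_image_of_injective _ hα]
      refine card_le_degree_of_subset_roots ?_
      intro x hx
      simp only [Finset.image_val, Multiset.mem_dedup, Multiset.mem_map, Finset.mem_val, Finset.mem_filter] at hx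
      obtain ⟨i, hi, rfl⟩ := hx
      rw [mem_roots hf]
      exact hi.2
    have h2 : hammingNorm (encMap k α v f) =
        (Finset.univ.filter fun i : Fin n => f.eval (α i) ≠ 0).card
          + (if f.coeff (k-1) = 0 then 0 else 1) := by
      unfold hammingNorm
      rw [Finset.card_filter, Fin.sum_univ_castSucc, Finset.card_filter]
      congr 1
      · refine Finset.sum_congr rfl fun i _ => ?_
        simp [encMap, hv0]
      · simp [encMap]
    have h3 := Finset.card_filter_add_card_filter_not (s := (Finset.univ : Finset (Fin n)))
      (fun i : Fin n => f.eval (α i) = 0)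
    simp only [Finset.card_univ, Fintype.card_fin] at h3
    rw [h2]
    split_ifs with hc
    · have : f.natDegree ≠ k - 1 := by
        intro h
        rw [← h] at hc
        exact hf (leadingCoeff_eq_zero.1 hc)
      simp only [ne_eq]
      omega
    · simp only [ne_eq]
      omega
  let φ : degreeLT F k →ₗ[F] (Fin (n + 1) → F) := (encMap k α v).comp (degreeLT F k).subtype
  have hinj : Function.Injective φ := by
    rw [injective_iff_map_eq_zero]
    intro f hf
    by_contra h
    have := hzero f.1 (fun h' => h (Subtype.ext h')) (mem_degreeLT.1 f.2)
    rw [show encMap k α v f.1 = 0 from hf] at this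
    simp at this
  have hrank : Module.finrank F (LinearMap.range φ) = k := by
    rw [LinearMap.finrank_range_of_inj hinj, (degreeLTEquiv F k).finrank_eq]
    simp
  refine ⟨LinearMap.range φ, ?_, hrank, ?_, ?_⟩
  · symm
    apply Submodule.eq_of_le_of_finrank_eq
    · rintro _ ⟨f, rfl⟩ _ ⟨g, rfl⟩
      rw [Fin.sum_univ_castSucc]
      simp only [φ, LinearMap.comp_apply, Submodule.subtype_apply, encMap, LinearMap.coe_mk,
        AddHom.coe_mk, Fin.snoc_castSucc, Fin.snoc_last]
      have hf := mem_degreeLT.1 f.2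
      have hg := mem_degreeLT.1 g.2
      have hd : ((f : F[X]) * g).degree < ((Finset.univ : Finset (Fin n)).card : ℕ) := by
        by_cases hf0 : (f : F[X]) = 0
        · rw [hf0]; simp
        by_cases hg0 : (g : F[X]) = 0
        · rw [hg0]; simp
        rw [← natDegree_lt_iff_degree_lt (mul_ne_zero hf0 hg0), natDegree_mul hf0 hg0]
        have := (natDegree_lt_iff_degree_lt hf0).2 hf
        have := (natDegree_lt_iff_degree_lt hg0).2 hg
        simp only [Finset.card_univ, Fintype.card_fin]
        omega
      have hL := Lagrange.coeff_eq_sum (s := Finset.univ) (v := α) hα.injOn hd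
      have hc : ((f : F[X]) * g).coeff ((Finset.univ : Finset (Fin n)).card - 1)
          = (f : F[X]).coeff (k-1) * (g : F[X]).coeff (k-1) := by
        have : (Finset.univ : Finset (Fin n)).card - 1 = (k - 1) + (k - 1) := by
          simp only [Finset.card_univ, Fintype.card_fin]; omega
        rw [this]
        have aux : ∀ f : F[X], f.degree < (k : ℕ) → f.natDegree ≤ k - 1 := by
          intro f hf
          have : f.degree ≤ ((k - 1 : ℕ) : WithBot ℕ) := by
            refine degree_le_iff_coeff_zero _ _ |>.2 fun m hm => ?_
            refine coeff_eq_zero_of_degree_lt (lt_of_lt_of_le hf ?_)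
            have : k - 1 < m := by exact_mod_cast hm
            exact_mod_cast (by omega : k ≤ m)
          exact natDegree_le_of_degree_le this
        exact coeff_mul_add_eq_of_natDegree_le (aux _ hf) (aux _ hg)
      rw [← hc, hL, ← Finset.sum_add_distrib]
      refine Finset.sum_eq_zero fun i _ => ?_
      have hp : ∏ j ∈ Finset.univ.erase i, (α i - α j) ≠ 0 := by
        intro h
        have := hv i
        simp [h] at this
      have := hv i
      rw [eval_mul]
      field_simp
      linear_combination (eval (α i) (f : F[X])) * (eval (α i) (g : F[X])) * this
    · rw [finrank_dualCode, hrank]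
      omega
  · rintro _ ⟨f, rfl⟩ h
    refine hzero f.1 (fun h' => h ?_) (mem_degreeLT.1 f.2)
    have : f = 0 := Subtype.ext h'
    rw [this, map_zero]
  · let T : Finset (Fin n) := Finset.univ.filter fun i => i.val < k - 1
    have hT : T.card = k - 1 := by
      simp only [T]
      rw [Fin.card_filter_val_lt]
      omega
    let f : F[X] := ∏ i ∈ T, (X - C (α i))
    have hf : f.Monic := monic_prod_of_monic _ _ fun i _ => monic_X_sub_C _
    have hfd : f.natDegree = k - 1 := by
      simp only [f]
      rw [natDegree_prod_of_monic _ _ fun i _ => monic_X_sub_C _]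
      simp [hT]
    have hfd' : f.degree < (k : ℕ) := by
      rw [← natDegree_lt_iff_degree_lt hf.ne_zero, hfd]; omega
    have hge := hzero f hf.ne_zero hfd'
    refine ⟨encMap k α v f, ⟨⟨f, mem_degreeLT.2 hfd'⟩, rfl⟩, ?_, le_antisymm ?_ hge⟩
    · intro h
      rw [h] at hge
      simp at hge
    · unfold hammingNorm
      have hsub : (Finset.univ.filter fun i => encMap k α v f i ≠ 0) ⊆
          (T.map Fin.castSuccEmb)ᶜ := by
        intro i hi
        simp only [Finset.mem_filter] at hi
        simp only [Finset.mem_compl, Finset.mem_map, not_exists, not_and]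
        rintro j hj rfl
        apply hi.2
        have : f.eval (α j) = 0 := by
          simp only [f, eval_prod]
          exact Finset.prod_eq_zero hj (by simp)
        simp [encMap, this]
      refine (Finset.card_le_card hsub).trans ?_
      rw [Finset.card_compl, Finset.card_map, hT, Fintype.card_fin]
      omega

open Polynomial in
lemma code_of_poly {F : Type*} [Field F] [DecidableEq F] {n k : ℕ} (hk : n + 1 = 2 * k)
    (P : F[X]) (hP : P.Monic) (hdeg : P.natDegree = n) (hroots : Multiset.card P.roots = n)
    (hsq : ∀ a, P.eval a = 0 → P.derivative.eval a ≠ 0 ∧ IsSquare (-(P.derivative.eval a))) :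
    ∃ C : Submodule F (Fin (n + 1) → F),
      dualCode C = C ∧ Module.finrank F C = k ∧ IsMinDist C (k + 1) := by
  classical
  have hnd : P.roots.Nodup := by
    rw [Multiset.nodup_iff_count_le_one]
    intro a
    rw [count_roots]
    by_contra h
    push Not at h
    have := (one_lt_rootMultiplicity_iff_isRoot hP.ne_zero).1 h
    exact (hsq a this.1).1 this.2
  let S : Finset F := ⟨P.roots, hnd⟩
  have hS : S.card = n := hroots
  let e : Fin n ≃ S := (S.equivFinOfCardEq hS).symm
  let α : Fin n → F := fun i => (e i : F)
  have hα : Function.Injective α := fun i j h => e.injective (Subtype.ext h)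
  have hPn : P = Lagrange.nodal Finset.univ α := by
    rw [← prod_multiset_X_sub_C_of_monic_of_roots_card_eq hP (hroots.trans hdeg.symm), Lagrange.nodal]
    change ∏ a ∈ S, (X - C a) = _
    rw [← Finset.prod_coe_sort S]
    exact (e.prod_comp (fun x : S => X - C (x : F))).symm
  have key : ∀ i, ∃ v : F, v ^ 2 * ∏ j ∈ Finset.univ.erase i, (α i - α j) = -1 := by
    intro i
    have h0 : P.eval (α i) = 0 := by
      have : α i ∈ P.roots := (e i).2
      exact (mem_roots hP.ne_zero).1 this
    obtain ⟨h1, w, hw⟩ := hsq _ h0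
    have h2 : P.derivative.eval (α i) = ∏ j ∈ Finset.univ.erase i, (α i - α j) := by
      rw [hPn, Lagrange.eval_nodal_derivative_eval_node_eq (Finset.mem_univ i), Lagrange.eval_nodal]
    rw [← h2]
    have hw0 : w ≠ 0 := by
      rintro rfl
      apply h1
      simpa using hw
    refine ⟨w⁻¹, ?_⟩
    rw [show eval (α i) (derivative P) = -(w*w) by rw [← hw, neg_neg]]
    field_simp
  choose v hv using key
  exact code_of_points hk α v hα hv

lemma sub_pow_r {F : Type*} [Field F] [Fintype F] {r : ℕ} (hr : IsPrimePow r)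
    (hF : Fintype.card F = r ^ 2) (a b : F) : (a - b) ^ r = a ^ r - b ^ r := by
  obtain ⟨p, k, hp, hk, rfl⟩ := hr
  have hp' := hp.nat_prime
  obtain ⟨p', hchar, m, hp2, hcard⟩ := FiniteField.card' F
  have : p = p' := by
    have h1 : p ∣ p' ^ (m : ℕ) := by
      rw [← hcard, hF, ← pow_mul]
      exact dvd_pow_self p (by omega)
    exact (Nat.prime_dvd_prime_iff_eq hp' hp2).1 (hp'.dvd_of_dvd_pow h1)
  subst this
  haveI : Fact p.Prime := ⟨hp'⟩
  exact sub_pow_char_pow a b k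

lemma natCast_pow_r {F : Type*} [Field F] [Fintype F] {r : ℕ} (hr : IsPrimePow r)
    (hF : Fintype.card F = r ^ 2) (a : ℕ) : (a : F) ^ r = a := by
  have h0 : r ≠ 0 := hr.ne_zero
  have hz : ∀ b : F, (-b) ^ r = - b ^ r := by
    intro b
    have := sub_pow_r hr hF 0 b
    simpa [h0] using this
  induction a with
  | zero => simp [h0]
  | succ a ih =>
    have := sub_pow_r hr hF (a : F) (-1)
    rw [hz, ih, one_pow, sub_neg_eq_add] at this
    push_cast
    exact this

/-- elements of the subfield -/
lemma chi_sub {F : Type*} [Field F] {r M : ℕ} (hM : r + 1 = 2 * M) (a : F) (ha : a ≠ 0)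
    (h : a ^ r = a) : a ^ ((r - 1) * M) = 1 := by
  have : a ^ (r - 1) = 1 := by
    apply mul_right_cancel₀ ha
    rw [← pow_succ, one_mul, show r - 1 + 1 = r by omega, h]
  rw [pow_mul, this, one_pow]

lemma chi_unit {F : Type*} [Field F] [Fintype F] {r M : ℕ} (hr : IsPrimePow r)
    (hF : Fintype.card F = r ^ 2) (hM : r + 1 = 2 * M) (u v : F) (huv : u ≠ v)
    (hu : u ^ (2 * M) = 1) (hv : v ^ (2 * M) = 1) :
    (u - v) ^ ((r - 1) * M) * (u ^ M * v ^ M) = (-1) ^ M := by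
  have h1 : (u - v) ^ (r - 1) * (u * v) = -1 := by
    apply mul_right_cancel₀ (sub_ne_zero.2 huv)
    have h2 := sub_pow_r hr hF u v
    rw [← hM, pow_succ] at hu hv
    calc _ = (u - v) ^ (r - 1 + 1) * (u * v) := by ring
      _ = (u ^ r - v ^ r) * (u * v) := by
        rw [show r - 1 + 1 = r by have := hr.one_lt; omega, h2]
      _ = -1 * (u - v) := by linear_combination v * hu - u * hv
  rw [pow_mul, ← mul_pow, ← mul_pow, h1]

open Polynomial in
lemma deriv_eval {F : Type*} [Field F] (f : ℕ) (u x : F) (Q : F[X]) (hx : x ^ f = u) :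
    (derivative ((X ^ f - C u) * Q)).eval x = f * x ^ (f - 1) * Q.eval x := by
  rw [derivative_mul, derivative_sub, derivative_X_pow, derivative_C]
  simp [hx]

lemma arith1 {e1 e2 M l : ℕ} (he1 : e1 % 2 ^ (l + 1) = 2 ^ l) (he2 : 2 ^ l ∣ e2)
    (h : e1 ∣ e2 * (2 * M)) : e1 ∣ e2 * M := by
  obtain ⟨o, ho⟩ : ∃ o, e1 = 2 ^ l * (2 * o + 1) := by
    refine ⟨e1 / 2 ^ (l + 1), ?_⟩
    have := Nat.div_add_mod e1 (2 ^ (l + 1))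
    rw [he1] at this
    rw [pow_succ] at this ⊢
    linear_combination -this
  obtain ⟨e, rfl⟩ := he2
  rw [ho] at h ⊢
  rw [mul_assoc] at h ⊢
  have h' := Nat.dvd_of_mul_dvd_mul_left (by positivity) h
  apply Nat.mul_dvd_mul_left
  have hc : Nat.Coprime (2 * o + 1) 2 := by simp
  exact hc.dvd_of_dvd_mul_left (by convert h' using 1; ring)
  
open Polynomial in
theorem main_aux (r e1 f1 e2 f2 s t l M E o : ℕ)
    (hr_pp : IsPrimePow r) (hM : r + 1 = 2 * M)
    (hq1 : r ^ 2 - 1 = e1 * f1) (hq2 : r ^ 2 - 1 = e2 * f2)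
    (hE : e1 = 2 * E) (hEe : Even E) (he2e : Even e2) (hEo : 2 * E = 2 ^ l * o) (ho : Odd o) (he2 : 2 ^ l ∣ e2)
    (hdvd1 : e2 ∣ E * (r - 1)) (hdvd2 : e1 ∣ e2 * M)
    (hs1 : 1 ≤ s) (hs2 : s ≤ e1 / Nat.gcd e1 e2)
    (ht2 : t ≤ e2 / Nat.gcd e1 e2)
    (h4 : Even ((s - 1) * M))
    (F : Type*) [Field F] [Fintype F] [DecidableEq F]
    (hF : Fintype.card F = r ^ 2) :
    ∃ P : F[X], P.Monic ∧ P.natDegree = s * f1 + t * f2 ∧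
      Multiset.card P.roots = s * f1 + t * f2 ∧
      ∀ a, P.eval a = 0 → (P.derivative.eval a) ^ ((r - 1) * M) = 1 := by
  classical
  have hr1 := hr_pp.one_lt
  have hqN : r ^ 2 - 1 = 2 * ((r - 1) * M) := by
    obtain ⟨r', rfl⟩ : ∃ r', r = r' + 1 := ⟨r - 1, by omega⟩
    have : (r' + 1) ^ 2 - 1 = r' * (r' + 1 + 1) := by
      rw [show (r' + 1) ^ 2 = r' * (r' + 1 + 1) + 1 by ring]; omega
    rw [this, hM]; simp; ring
  set N := (r - 1) * M with hN
  have hNpos : 0 < N := Nat.mul_pos (by omega) (by omega)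
  have hq1' : 2 * N = e1 * f1 := hqN ▸ hq1
  have hq2' : 2 * N = e2 * f2 := hqN ▸ hq2
  have he1p : 0 < e1 := Nat.pos_of_ne_zero (by rintro rfl; omega)
  have he2p : 0 < e2 := Nat.pos_of_ne_zero (by rintro rfl; omega)
  have hf1p : 0 < f1 := Nat.pos_of_ne_zero (by rintro rfl; omega)
  have hf2p : 0 < f2 := Nat.pos_of_ne_zero (by rintro rfl; omega)
  haveI : NeZero f1 := ⟨hf1p.ne'⟩
  haveI : NeZero f2 := ⟨hf2p.ne'⟩
  -- primitive root
  obtain ⟨g, hg⟩ : ∃ g : F, IsPrimitiveRoot g (2 * N) := by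
    obtain ⟨g, hg⟩ := IsCyclic.exists_ofOrder_eq_natCard (α := Fˣ)
    refine ⟨g, IsPrimitiveRoot.coe_units_iff.2 ?_⟩
    rw [IsPrimitiveRoot.iff_orderOf, hg, Nat.card_eq_fintype_card, Fintype.card_units, hF, hqN]
  have hg1 : ∀ m, 2 * N ∣ m → g ^ m = 1 := fun m => (hg.pow_eq_one_iff_dvd m).2
  have hgN : g ^ N = -1 :=
    (hg.pow (by omega) (mul_comm 2 N)).eq_neg_one_of_two_right
  have hg0 : g ≠ 0 := hg.ne_zero (by omega)
  have hpr1 : IsPrimitiveRoot (g ^ e1) f1 := hg.pow (by omega) hq1'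
  have hpr2 : IsPrimitiveRoot (g ^ e2) f2 := hg.pow (by omega) hq2'
  have hEf1 : E * f1 = N := by
    have : 2 * (E * f1) = 2 * N := by rw [hq1', hE]; ring
    omega
  have hchi_pow : ∀ (x : F) m, x ^ N = 1 → (x ^ m) ^ N = 1 := by
    intro x m hx
    rw [← pow_mul, mul_comm, pow_mul, hx, one_pow]
  have hgeven : ∀ m, Even m → (g ^ m) ^ N = 1 := by
    rintro m ⟨c, rfl⟩
    rw [← pow_mul]
    exact hg1 _ ⟨c, by ring⟩
  have hN0 : ∀ x : F, x ^ N = 1 → x ≠ 0 := by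
    rintro x hx rfl
    rw [zero_pow hNpos.ne'] at hx
    exact zero_ne_one hx
  -- naturals
  have hcast : ∀ f e : ℕ, 2 * N = e * f → (f : F) ^ N = 1 := by
    intro f e h
    apply chi_sub hM _ _ (natCast_pow_r hr_pp hF f)
    intro h0
    have h1 : ((r ^ 2 : ℕ) : F) = 0 := by rw [← hF]; exact FiniteField.cast_card_eq_zero F
    have h2 : r ^ 2 = e * f + 1 := by
      have : 0 < r ^ 2 := by positivity
      omega
    rw [h2] at h1
    push_cast at h1
    rw [h0] at h1
    simp at h1
  have hf1c := hcast f1 e1 hq1'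
  have hf2c := hcast f2 e2 hq2'
  -- the constants
  let u : ℕ → F := fun i => g ^ (e2 * f1 * i)
  let c : ℕ → F := fun j => g ^ (E * f2 * (2 * j + 1))
  have huM : ∀ i, u i ^ M = 1 := by
    intro i
    simp only [u]
    rw [← pow_mul]
    apply hg1
    rw [hq1']
    obtain ⟨d, hd⟩ := hdvd2
    exact ⟨d * i, by linear_combination f1 * i * hd⟩
  have hgr : ∀ m, (g ^ (E * f2 * m)) ^ r = g ^ (E * f2 * m) := by
    intro m
    obtain ⟨d, hd⟩ := hdvd1
    have : (g ^ (E * f2 * m)) ^ (r - 1) = 1 := by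
      rw [← pow_mul]
      apply hg1
      rw [hq2']
      exact ⟨d * m, by linear_combination f2 * m * hd⟩
    calc _ = (g ^ (E * f2 * m)) ^ (r - 1 + 1) := by rw [show r - 1 + 1 = r by omega]
      _ = _ := by rw [pow_succ, this, one_mul]
  have huinj : ∀ i < s, ∀ j < s, u i = u j → i = j := by
    intro i hi j hj h
    simp only [u, pow_mul g (e2 * f1)] at h
    have hd : 2 * N = Nat.gcd e1 e2 * f1 * (e1 / Nat.gcd e1 e2) := by
      have := Nat.mul_div_cancel' (Nat.gcd_dvd_left e1 e2)
      rw [hq1']; nth_rw 1 [← this]; ring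
    have ho : orderOf (g ^ (e2 * f1)) = e1 / Nat.gcd e1 e2 := by
      rw [orderOf_pow' _ (by positivity), ← hg.eq_orderOf, hq1', Nat.gcd_mul_right, Nat.mul_div_mul_right _ _ hf1p]
    exact pow_injOn_Iio_orderOf (x := g ^ (e2 * f1)) (by rw [ho]; exact lt_of_lt_of_le hi hs2)
      (by rw [ho]; exact lt_of_lt_of_le hj hs2) h
  have hcinj : ∀ i < t, ∀ j < t, c i = c j → i = j := by
    intro i hi j hj h
    have hce : ∀ j, c j = g ^ (E * f2) * (g ^ (e1 * f2)) ^ j := by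
      intro j
      simp only [c]
      rw [← pow_mul, ← pow_add, hE]
      congr 1; ring
    rw [hce, hce] at h
    have h := mul_left_cancel₀ (pow_ne_zero _ hg0) h
    have ho : orderOf (g ^ (e1 * f2)) = e2 / Nat.gcd e1 e2 := by
      rw [orderOf_pow' _ (by positivity), ← hg.eq_orderOf, hq2', Nat.gcd_mul_right, Nat.mul_div_mul_right _ _ hf2p, Nat.gcd_comm]
    exact pow_injOn_Iio_orderOf (x := g ^ (e1 * f2)) (by rw [ho]; exact lt_of_lt_of_le hi ht2)
      (by rw [ho]; exact lt_of_lt_of_le hj ht2) h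
  -- roots
  have hroot1 : ∀ x i, x ^ f1 = u i → ∃ m, x = g ^ (e2 * i + e1 * m) := by
    intro x i hx
    have hb : g ^ (e2 * i) ≠ 0 := pow_ne_zero _ hg0
    have : (x / g ^ (e2 * i)) ^ f1 = 1 := by
      rw [div_pow, hx, ← pow_mul, show e2 * i * f1 = e2 * f1 * i by ring]
      exact div_self (pow_ne_zero _ hg0)
    obtain ⟨m, -, hm⟩ := hpr1.eq_pow_of_pow_eq_one this
    refine ⟨m, ?_⟩
    rw [eq_div_iff hb] at hm
    rw [← hm, ← pow_mul, ← pow_add]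
    congr 1; ring
  have hroot2 : ∀ x j, x ^ f2 = c j → ∃ m, x = g ^ (E * (2 * j + 1) + e2 * m) := by
    intro x i hx
    have hb : g ^ (E * (2 * i + 1)) ≠ 0 := pow_ne_zero _ hg0
    have : (x / g ^ (E * (2 * i + 1))) ^ f2 = 1 := by
      rw [div_pow, hx, ← pow_mul, show E * (2 * i + 1) * f2 = E * f2 * (2 * i + 1) by ring]
      exact div_self (pow_ne_zero _ hg0)
    obtain ⟨m, -, hm⟩ := hpr2.eq_pow_of_pow_eq_one this
    refine ⟨m, ?_⟩
    rw [eq_div_iff hb] at hm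
    rw [← hm, ← pow_mul, ← pow_add]
    congr 1; ring
  have hneg : (1 : F) ≠ -1 := by
    rw [← hgN]
    intro h
    have := (hg.pow_eq_one_iff_dvd N).1 h.symm
    have := Nat.le_of_dvd hNpos this
    omega
  have hdisj : ∀ x i j, x ^ f1 = u i → x ^ f2 = c j → False := by
    intro x i j h1 h2
    obtain ⟨m, hm⟩ := hroot1 x i h1
    obtain ⟨m', hm'⟩ := hroot2 x j h2
    obtain ⟨e, he⟩ := he2
    have hK : 2 * N = 2 ^ l * (e * f2) := by rw [hq2', he]; ring
    have a1 : x ^ (e * f2) = 1 := by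
      rw [hm, ← pow_mul]
      apply hg1
      rw [hK, he, hE, hEo]
      exact ⟨e * i + o * m, by ring⟩
    have a2 : x ^ (e * f2) = -1 := by
      rw [hm', ← pow_mul]
      have : (E * (2 * j + 1) + e2 * m') * (e * f2) = N * (o * (2 * j + 1)) + 2 * N * (e * m') := by
        have h3 : 2 * (E * (e * f2)) = 2 * (N * o) := by
          linear_combination (e * f2) * hEo - o * hK
        have h3 : E * (e * f2) = N * o := by omega
        rw [hK, he]
        linear_combination (2 * j + 1) * h3
      rw [this, pow_add, pow_mul, hgN, hg1 _ ⟨_, rfl⟩, mul_one]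
      exact (ho.mul ⟨j, rfl⟩).neg_one_pow
    exact hneg (a1.symm.trans a2)
  let A : ℕ → F[X] := fun i => X ^ f1 - C (u i)
  let B : ℕ → F[X] := fun j => X ^ f2 - C (c j)
  have hA : ∀ i, (A i).Monic := fun i => monic_X_pow_sub_C _ hf1p.ne'
  have hB : ∀ i, (B i).Monic := fun i => monic_X_pow_sub_C _ hf2p.ne'
  have hAp := monic_prod_of_monic (Finset.range s) A fun i _ => hA i
  have hBp := monic_prod_of_monic (Finset.range t) B fun i _ => hB i
  refine ⟨(∏ i ∈ Finset.range s, A i) * ∏ j ∈ Finset.range t, B j, hAp.mul hBp, ?_, ?_, ?_⟩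
  · rw [hAp.natDegree_mul hBp, natDegree_prod_of_monic _ _ fun i _ => hA i,
      natDegree_prod_of_monic _ _ fun i _ => hB i]
    simp [A, B, natDegree_X_pow_sub_C]
  · rw [roots_mul (hAp.mul hBp).ne_zero, roots_prod _ _ hAp.ne_zero, roots_prod _ _ hBp.ne_zero]
    have c1 : ∀ i, Multiset.card (A i).roots = f1 := by
      intro i
      have := hpr1.card_nthRoots (u i)
      rw [if_pos ⟨g ^ (e2 * i), by simp only [u]; rw [← pow_mul]; congr 1; ring⟩] at this
      exact this
    have c2 : ∀ i, Multiset.card (B i).roots = f2 := by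
      intro i
      have := hpr2.card_nthRoots (c i)
      rw [if_pos ⟨g ^ (E * (2 * i + 1)), by simp only [c]; rw [← pow_mul]; congr 1; ring⟩] at this
      exact this
    rw [Multiset.card_add, Multiset.card_bind, Multiset.card_bind]
    simp [Function.comp_def, c1, c2]
  · intro x hx
    rw [eval_mul, mul_eq_zero, eval_prod, eval_prod, Finset.prod_eq_zero_iff,
      Finset.prod_eq_zero_iff] at hx
    rcases hx with ⟨i, hi, hx⟩ | ⟨j, hj, hx⟩
    · have hxi : x ^ f1 = u i := by
        simpa [A, sub_eq_zero] using hx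
      obtain ⟨m, hm⟩ := hroot1 x i hxi
      rw [← Finset.mul_prod_erase _ _ hi, mul_assoc, deriv_eval _ _ _ _ hxi, mul_pow, mul_pow, hf1c]
      have hxN : x ^ N = 1 := by
        rw [hm]
        exact hgeven _ ((he2e.mul_right _).add ((hE ▸ even_two_mul E : Even e1).mul_right _))
      rw [hchi_pow _ _ hxN, eval_mul, eval_prod, eval_prod, mul_pow, ← Finset.prod_pow, ← Finset.prod_pow]
      have p1 : ∏ i' ∈ (Finset.range s).erase i, (A i').eval x ^ N = 1 := by
        have : ∀ i' ∈ (Finset.range s).erase i, (A i').eval x ^ N = (-1) ^ M := by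
          intro i' hi'
          have hne : u i ≠ u i' := by
            intro h
            exact (Finset.mem_erase.1 hi').1 (huinj _ (Finset.mem_range.1 hi) _
              (Finset.mem_range.1 (Finset.mem_erase.1 hi').2) h).symm
          have := chi_unit hr_pp hF hM (u i) (u i') hne (by rw [mul_comm, pow_mul, huM, one_pow])
            (by rw [mul_comm, pow_mul, huM, one_pow])
          rw [huM, huM, mul_one, mul_one] at this
          simpa [A, hxi] using this
        rw [Finset.prod_congr rfl this, Finset.prod_const, Finset.card_erase_of_mem hi,
          Finset.card_range, ← pow_mul, mul_comm]
        exact h4.neg_one_pow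
      have p2 : ∏ j ∈ Finset.range t, (B j).eval x ^ N = 1 := by
        refine Finset.prod_eq_one fun j _ => ?_
        have hxf : x ^ f2 = g ^ (E * f2 * (2 * m)) := by
          rw [hm, ← pow_mul, show (e2 * i + e1 * m) * f2 = 2 * N * i + E * f2 * (2 * m) by
            rw [hq2', hE]; ring, pow_add, hg1 _ ⟨_, rfl⟩, one_mul]
        have hev : (B j).eval x = x ^ f2 - c j := by simp [B]
        rw [hev]
        apply chi_sub hM
        · exact sub_ne_zero.2 fun h => hdisj x i j hxi h
        · rw [sub_pow_r hr_pp hF, hxf]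
          simp only [c]
          rw [hgr, hgr]
      rw [p1, p2]; simp
    · have hxj : x ^ f2 = c j := by
        simpa [B, sub_eq_zero] using hx
      obtain ⟨m, hm⟩ := hroot2 x j hxj
      rw [← Finset.mul_prod_erase _ _ hj, mul_left_comm, deriv_eval _ _ _ _ hxj, mul_pow, mul_pow, hf2c]
      have hxN : x ^ N = 1 := by
        rw [hm]
        exact hgeven _ ((hEe.mul_right _).add (he2e.mul_right _))
      rw [hchi_pow _ _ hxN, eval_mul, eval_prod, eval_prod, mul_pow, ← Finset.prod_pow, ← Finset.prod_pow]
      have p1 : ∏ i ∈ Finset.range s, (A i).eval x ^ N = 1 := by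
        refine Finset.prod_eq_one fun i _ => ?_
        have hxf : x ^ f1 = - u m := by
          rw [hm, ← pow_mul, show (E * (2 * j + 1) + e2 * m) * f1 = 2 * N * j + N + e2 * f1 * m by
            rw [← hEf1]; ring, pow_add, pow_add, hg1 _ ⟨_, rfl⟩, hgN]
          simp [u]
        have hev : (A i).eval x = x ^ f1 - u i := by simp [A]
        have hne : - u m ≠ u i := by
          rw [← hxf]
          exact fun h => hdisj x i j h hxj
        have := chi_unit hr_pp hF hM (- u m) (u i) hne (by rw [(even_two_mul M).neg_pow, mul_comm, pow_mul, huM, one_pow])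
            (by rw [mul_comm, pow_mul, huM, one_pow])
        rw [hev, hxf]
        rw [neg_pow (u m) M, huM, huM, mul_one, mul_one] at this
        exact mul_right_cancel₀ (pow_ne_zero M (neg_ne_zero.2 one_ne_zero)) (this.trans (one_mul _).symm)
      have p2 : ∏ j' ∈ (Finset.range t).erase j, (B j').eval x ^ N = 1 := by
        refine Finset.prod_eq_one fun j' hj' => ?_
        have hev : (B j').eval x = c j - c j' := by simp [B, hxj]
        rw [hev]
        apply chi_sub hM
        · refine sub_ne_zero.2 fun h => ?_
          exact (Finset.mem_erase.1 hj').1 (hcinj _ (Finset.mem_range.1 hj) _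
              (Finset.mem_range.1 (Finset.mem_erase.1 hj').2) h).symm
        · rw [sub_pow_r hr_pp hF]
          simp only [c]
          rw [hgr, hgr]
      rw [p1, p2]; simp

/-- Theorem 3.2(2): if `n₁ = s·f₁ + t·f₂` is odd, there is a `q`-ary MDS self-dual code
of length `n₁ + 1`, where `q = r²`. -/
theorem mds_self_dual_of_odd_length_succ
    (r e1 f1 e2 f2 s t l : ℕ)
    (hr_odd : Odd r) (hr_pp : IsPrimePow r)
    (hq1 : r ^ 2 - 1 = e1 * f1) (hq2 : r ^ 2 - 1 = e2 * f2)
    (hl : 2 ≤ l) (he1 : e1 % 2 ^ (l + 1) = 2 ^ l) (he2 : 2 ^ l ∣ e2)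
    (hdvd1 : 2 * e2 ∣ e1 * (r - 1)) (hdvd2 : e1 ∣ e2 * (r + 1))
    (hs1 : 1 ≤ s) (hs2 : s ≤ e1 / Nat.gcd e1 e2)
    (ht1 : 1 ≤ t) (ht2 : t ≤ e2 / Nat.gcd e1 e2)
    (h4 : 4 ∣ (s - 1) * (r + 1))
    (hn1 : Odd (s * f1 + t * f2))
    (F : Type*) [Field F] [Fintype F] [DecidableEq F]
    (hF : Fintype.card F = r ^ 2) :
    ∃ C : Submodule F (Fin (s * f1 + t * f2 + 1) → F),
      dualCode C = C ∧
      Module.finrank F C = (s * f1 + t * f2 + 1) / 2 ∧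
      IsMinDist C ((s * f1 + t * f2 + 1) / 2 + 1) := by
  obtain ⟨M', hM'⟩ := hr_odd
  obtain ⟨M, hM⟩ : ∃ M, r + 1 = 2 * M := ⟨M' + 1, by omega⟩
  have hr1 := hr_pp.one_lt
  obtain ⟨o, ho⟩ : ∃ o, e1 = 2 ^ l * (2 * o + 1) := by
    refine ⟨e1 / 2 ^ (l + 1), ?_⟩
    have := Nat.div_add_mod e1 (2 ^ (l + 1))
    rw [he1] at this
    rw [pow_succ] at this ⊢
    linear_combination -this
  obtain ⟨l', rfl⟩ : ∃ l', l = l' + 2 := ⟨l - 2, by omega⟩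
  have hE : e1 = 2 * (2 ^ (l' + 1) * (2 * o + 1)) := by rw [ho]; ring
  have h2 : e1 ∣ e2 * M := arith1 he1 he2 (hM ▸ hdvd2)
  have h1 : e2 ∣ (2 ^ (l' + 1) * (2 * o + 1)) * (r - 1) := by
    rw [hE, mul_assoc] at hdvd1
    exact Nat.dvd_of_mul_dvd_mul_left (by norm_num) hdvd1
  have h4' : Even ((s - 1) * M) := by
    rw [hM] at h4
    rw [even_iff_two_dvd]
    apply Nat.dvd_of_mul_dvd_mul_left (k := 2) (by norm_num)
    rw [mul_left_comm] at h4
    exact h4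
  obtain ⟨P, hP, hdeg, hroots, hsq⟩ := main_aux r e1 f1 e2 f2 s t (l' + 2) M
    (2 ^ (l' + 1) * (2 * o + 1)) (2 * o + 1) hr_pp hM hq1 hq2 hE
    (by rw [pow_succ]; exact ((even_two.mul_left _).mul_right _))
    (even_iff_two_dvd.2 ((dvd_pow_self 2 (by omega)).trans he2))
    (by ring) ⟨o, rfl⟩ he2 h1 h2 hs1 hs2 ht2 h4' F hF
  obtain ⟨k, hk⟩ := hn1
  have hk' : s * f1 + t * f2 + 1 = 2 * (k + 1) := by omega
  have hk2 : (s * f1 + t * f2 + 1) / 2 = k + 1 := by omega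
  rw [hk2]
  refine code_of_poly hk' P hP hdeg hroots fun a ha => ?_
  have h := hsq a ha
  have hN0 : (r - 1) * M ≠ 0 := (Nat.mul_pos (by omega) (by omega)).ne'
  have hne : P.derivative.eval a ≠ 0 := by
    intro h0
    rw [h0, zero_pow hN0] at h
    exact zero_ne_one h
  refine ⟨hne, ?_⟩
  have hchar : ringChar F ≠ 2 := by
    intro h
    have := FiniteField.even_card_of_char_two h
    rw [hF] at this
    have h3 : Odd (r ^ 2) := Odd.pow ⟨M', hM'⟩
    rw [Nat.odd_iff] at h3
    omega
  have hr2 : r ^ 2 / 2 = (r - 1) * M := by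
    have : r ^ 2 = 2 * ((r - 1) * M) + 1 := by
      have hM2 : M = M' + 1 := by omega
      subst hM2
      rw [hM']
      simp
      ring
    omega
  rw [FiniteField.isSquare_iff hchar (neg_ne_zero.2 hne), hF, hr2, Even.neg_pow _, h]
  apply Even.mul_right
  rw [hM']
  simp
end

section
/- Let q = r^2 with r an odd prime power. Suppose q − 1 = e_1 f_1 = e_2 f_2, there exists an integer l ≥ 2 with e_1 ≡ 2^l (mod 2^{l+1}) and 2^l | e_2, and that 2e_2 | e_1(r+1) and e_1 | e_2(r−1). Let s, t be integers with 1 ≤ s ≤ D_1 and 1 ≤ t ≤ D_2, and set n_1 = s·f_1 + t·f_2. If both the integer t·e_1(r+1)/(2e_2) + (r+1)/2 and n_1 are even, then there exists an MDS self-dual code over F_q of length n_1, i.e., a linear code C ⊆ F_q^{n_1} with C = C⊥, dim C = n_1/2, and minimum Hamming distance n_1/2 + 1. -/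
open Polynomial in
lemma grs_aux {F : Type*} [Field F] [DecidableEq F] (n k : ℕ) (hk : 0 < k) (hn : n = 2 * k)
    (a v : Fin n → F) (ha : Function.Injective a) (hv : ∀ i, v i ≠ 0) (μ : F)
    (h : ∀ i, v i ^ 2 * ∏ j ∈ Finset.univ.erase i, (a i - a j) = μ) :
    ∃ C : Submodule F (Fin n → F),
      dualCode C = C ∧ Module.finrank F C = n / 2 ∧ IsMinDist C (n / 2 + 1) := by
  classical
  have hn2 : n / 2 = k := by omega
  rw [hn2]
  let φ : degreeLT F k →ₗ[F] (Fin n → F) :=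
    { toFun := fun f i => v i * (f : F[X]).eval (a i)
      map_add' := by intro f g; ext i; simp [mul_add]
      map_smul' := by intro c f; ext i; simp; ring }
  have hφ : ∀ f i, φ f i = v i * (f : F[X]).eval (a i) := fun f i => rfl
  -- weight bound
  have hwt : ∀ f : degreeLT F k, f ≠ 0 → k + 1 ≤ hammingNorm (φ f) := by
    intro f hf
    have hf0 : (f : F[X]) ≠ 0 := by simpa using hf
    have hdeg : (f : F[X]).natDegree < k := by
      have := mem_degreeLT.1 f.2
      exact (natDegree_lt_iff_degree_lt hf0).2 this
    have h1 : (Finset.univ.filter (fun i => φ f i = 0)).card ≤ (f : F[X]).natDegree := by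
      rw [← Finset.card_image_of_injective _ ha]
      apply card_le_degree_of_subset_roots
      intro x hx
      simp only [Finset.mem_val, Finset.mem_image, Finset.mem_filter, Finset.mem_univ,
        true_and] at hx
      obtain ⟨i, hi, rfl⟩ := hx
      rw [hφ] at hi
      rw [mem_roots hf0]
      exact (mul_eq_zero.1 hi).resolve_left (hv i)
    have h2 := Finset.card_filter_add_card_filter_not (s := (Finset.univ : Finset (Fin n)))
      (fun i => φ f i = 0)
    have h3 : hammingNorm (φ f) = (Finset.univ.filter (fun i => ¬ φ f i = 0)).card := rfl
    simp only [Finset.card_univ, Fintype.card_fin] at h2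
    omega
  have hinj : Function.Injective φ := by
    rw [injective_iff_map_eq_zero]
    intro f hf
    by_contra h0
    have := hwt f h0
    rw [hf] at this
    simp at this
  have hfr : Module.finrank F (LinearMap.range φ) = k := by
    rw [LinearMap.finrank_range_of_inj hinj, (degreeLTEquiv F k).finrank_eq]
    simp
  have hΔ : ∀ i, ∏ j ∈ Finset.univ.erase i, (a i - a j) ≠ 0 := by
    intro i
    rw [Finset.prod_ne_zero_iff]
    intro j hj
    rw [sub_ne_zero]
    intro hh
    exact (Finset.mem_erase.1 hj).1 (ha hh).symm
  have hso : LinearMap.range φ ≤ dualCode (LinearMap.range φ) := by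
    rintro _ ⟨f, rfl⟩ _ ⟨g, rfl⟩
    have hd : ((f : F[X]) * (g : F[X])).degree < (n - 1 : ℕ) := by
      have hf := mem_degreeLT.1 f.2
      have hg := mem_degreeLT.1 g.2
      by_cases hf0 : (f : F[X]) = 0
      · rw [hf0]; simp
      by_cases hg0 : (g : F[X]) = 0
      · rw [hg0]; simp
      rw [← natDegree_lt_iff_degree_lt (mul_ne_zero hf0 hg0), natDegree_mul hf0 hg0]
      rw [← natDegree_lt_iff_degree_lt hf0] at hf
      rw [← natDegree_lt_iff_degree_lt hg0] at hg
      omega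
    have := Lagrange.coeff_eq_sum (s := Finset.univ) (v := a) ha.injOn
      (P := (f : F[X]) * (g : F[X])) (by
        refine hd.trans_le ?_
        simp)
    rw [Finset.card_univ, Fintype.card_fin, coeff_eq_zero_of_degree_lt hd] at this
    calc ∑ i, φ f i * φ g i
        = ∑ i, μ * (((f : F[X]) * (g : F[X])).eval (a i) /
            ∏ j ∈ Finset.univ.erase i, (a i - a j)) := by
          refine Finset.sum_congr rfl fun i _ => ?_
          rw [hφ, hφ, eval_mul, ← h i]
          have := hΔ i
          field_simp
      _ = 0 := by rw [← Finset.mul_sum, ← this, mul_zero]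
  have hdual : dualCode (LinearMap.range φ) =
      LinearMap.BilinForm.orthogonal (Matrix.toBilin' (1 : Matrix (Fin n) (Fin n) F))
        (LinearMap.range φ) := by
    ext x
    rw [LinearMap.BilinForm.mem_orthogonal_iff]
    refine forall₂_congr fun c _ => ?_
    rw [Matrix.toBilin'_apply']
    simp [dotProduct, mul_comm]
  have hfd : Module.finrank F (dualCode (LinearMap.range φ)) = k := by
    rw [hdual, LinearMap.BilinForm.finrank_orthogonal, hfr]
    · simp; omega
    · exact (Matrix.nondegenerate_of_det_ne_zero (by simp)).toBilin'
  refine ⟨LinearMap.range φ, (Submodule.eq_of_le_of_finrank_eq hso (by rw [hfr, hfd])).symm, hfr,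
    ?_, ?_⟩
  · rintro _ ⟨f, rfl⟩ hc
    exact hwt f (by rintro rfl; simp at hc)
  · obtain ⟨T, -, hT⟩ := Finset.exists_subset_card_eq (s := (Finset.univ : Finset (Fin n)))
      (n := k - 1) (by simp; omega)
    let f : degreeLT F k := ⟨∏ i ∈ T, (X - C (a i)), by
      rw [mem_degreeLT, degree_prod_of_monic _ _ (fun i _ => monic_X_sub_C _)]
      simp only [degree_X_sub_C, Finset.sum_const, hT, nsmul_eq_mul, mul_one]
      norm_cast; omega⟩
    have hf : f ≠ 0 := by
      intro hf
      have : (f : F[X]) = 0 := by rw [hf]; rfl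
      exact (monic_prod_of_monic T _ (fun i _ => monic_X_sub_C (a i))).ne_zero this
    refine ⟨φ f, ⟨f, rfl⟩, fun h0 => hf (hinj (by rw [h0, map_zero])), ?_⟩
    refine le_antisymm ?_ (hwt f hf)
    have h3 : hammingNorm (φ f) = (Finset.univ.filter (fun i => ¬ φ f i = 0)).card := rfl
    have h4 : (Finset.univ.filter (fun i => ¬ φ f i = 0)) ⊆ Tᶜ := by
      intro i hi
      rw [Finset.mem_compl]
      intro hiT
      refine (Finset.mem_filter.1 hi).2 ?_
      rw [hφ]
      have : (f : F[X]).eval (a i) = 0 := by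
        change (∏ i ∈ T, (X - C (a i))).eval (a i) = 0
        rw [eval_prod]
        exact Finset.prod_eq_zero hiT (by simp)
      rw [this, mul_zero]
    have h5 := Finset.card_le_card h4
    rw [Finset.card_compl, hT, Fintype.card_fin] at h5
    omega

open Polynomial in
lemma grs_finset {F : Type*} [Field F] [Fintype F] [DecidableEq F] (hchar : ringChar F ≠ 2)
    (n : ℕ) (hpos : 0 < n) (hev : Even n) (S : Finset F) (hS : S.card = n) (ε : F)
    (h : ∀ x ∈ S, (derivative (∏ y ∈ S, (X - C y))).eval x ^ (Fintype.card F / 2) = ε) :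
    ∃ C : Submodule F (Fin n → F),
      dualCode C = C ∧ Module.finrank F C = n / 2 ∧ IsMinDist C (n / 2 + 1) := by
  classical
  have hd : ∀ x ∈ S, (derivative (∏ y ∈ S, (X - C y))).eval x = ∏ y ∈ S.erase x, (x - y) := by
    intro x hx
    have := Lagrange.eval_nodal_derivative_eval_node_eq (s := S) (v := (id : F → F)) hx
    rw [Lagrange.eval_nodal] at this
    exact this
  have hne : ∀ x ∈ S, ∏ y ∈ S.erase x, (x - y) ≠ 0 := by
    intro x hx
    rw [Finset.prod_ne_zero_iff]
    intro y hy
    rw [sub_ne_zero]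
    exact (Finset.mem_erase.1 hy).1.symm
  have hε : ∀ x ∈ S, (∏ y ∈ S.erase x, (x - y)) ^ (Fintype.card F / 2) = ε := by
    intro x hx
    rw [← hd x hx, h x hx]
  obtain ⟨x0, hx0⟩ : S.Nonempty := Finset.card_pos.1 (by omega)
  have hε2 : ε * ε = 1 := by
    rcases FiniteField.pow_dichotomy hchar (hne x0 hx0) with h1 | h1 <;>
    · rw [hε x0 hx0] at h1
      rw [h1]; simp
  have hsq : ∀ x ∈ S, ∃ v : F, v ≠ 0 ∧
      v ^ 2 * ∏ y ∈ S.erase x, (x - y) = ∏ y ∈ S.erase x0, (x0 - y) := by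
    intro x hx
    have h1 := hne x hx
    have h0 := hne x0 hx0
    have : IsSquare ((∏ y ∈ S.erase x0, (x0 - y)) * ∏ y ∈ S.erase x, (x - y)) := by
      rw [FiniteField.isSquare_iff hchar (mul_ne_zero h0 h1), mul_pow, hε x hx, hε x0 hx0, hε2]
    obtain ⟨w, hw⟩ := this
    have hw0 : w ≠ 0 := by
      rintro rfl
      exact mul_ne_zero h0 h1 (by rw [hw, mul_zero])
    refine ⟨w / ∏ y ∈ S.erase x, (x - y), div_ne_zero hw0 h1, ?_⟩
    have : w ^ 2 = (∏ y ∈ S.erase x0, (x0 - y)) * ∏ y ∈ S.erase x, (x - y) := by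
      rw [hw, sq]
    rw [div_pow, this]
    field_simp
  choose! v hv0 hv using hsq
  let e : Fin n ≃ S := (S.equivFinOfCardEq hS).symm
  obtain ⟨k, hk⟩ := hev
  refine grs_aux n k (by omega) (by omega) (fun i => (e i : F)) (fun i => v (e i))
    (fun i j hij => e.injective (Subtype.ext hij)) (fun i => hv0 _ (e i).2)
    (∏ y ∈ S.erase x0, (x0 - y)) (fun i => ?_)
  rw [← hv _ (e i).2]
  congr 1
  refine Finset.prod_bij (fun j _ => (e j : F)) ?_ ?_ ?_ ?_
  · intro j hj
    refine Finset.mem_erase.2 ⟨?_, (e j).2⟩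
    intro hh
    exact (Finset.mem_erase.1 hj).1 (e.injective (Subtype.ext hh))
  · intro j _ j' _ hh
    exact e.injective (Subtype.ext hh)
  · intro y hy
    obtain ⟨hy1, hy2⟩ := Finset.mem_erase.1 hy
    refine ⟨e.symm ⟨y, hy2⟩, ?_, by simp⟩
    refine Finset.mem_erase.2 ⟨?_, Finset.mem_univ _⟩
    intro hh
    apply hy1
    rw [← hh]; simp
  · intro j _; rfl

open Polynomial in
lemma fiber_prod {F : Type*} [Field F] [Fintype F] [DecidableEq F] (e f : ℕ)
    (hef : e * f = Fintype.card F - 1) (p : F) (hp : p ^ e = 1) :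
    ∏ y ∈ Finset.univ.filter (fun y : F => y ^ f = p), (X - C y) = X ^ f - C p := by
  classical
  have hc : 1 < Fintype.card F := Fintype.one_lt_card
  have he : e ≠ 0 := by rintro rfl; simp at hef; omega
  have hf : f ≠ 0 := by rintro rfl; simp at hef; omega
  have hp0 : p ≠ 0 := by rintro rfl; simp [he] at hp
  have hf0 : (f : F) ≠ 0 := by
    intro h0
    have h1 : ((e * f + 1 : ℕ) : F) = 0 := by
      rw [hef, Nat.sub_add_cancel hc.le]; exact FiniteField.cast_card_eq_zero F
    push_cast at h1
    rw [h0] at h1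
    simp at h1
  have hm : (X ^ f - C p : F[X]).Monic := monic_X_pow_sub_C p hf
  have hsp : (X ^ Fintype.card F - X : F[X]).Splits := by
    rw [splits_iff_card_roots, FiniteField.roots_X_pow_card_sub_X,
      FiniteField.X_pow_card_sub_X_natDegree_eq F hc]
    rfl
  have hdvd : (X ^ f - C p : F[X]) ∣ X ^ Fintype.card F - X := by
    have h1 : (X ^ f - C p : F[X]) ∣ (X ^ f) ^ e - (C p) ^ e := sub_dvd_pow_sub_pow _ _ _
    have h2 : (X ^ Fintype.card F - X : F[X]) = X * ((X ^ f) ^ e - (C p) ^ e) := by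
      rw [← C_pow, hp, ← pow_mul, mul_comm f e, hef, mul_sub, ← pow_succ',
        Nat.sub_add_cancel hc.le]
      simp
    rw [h2]
    exact h1.mul_left _
  have hs2 := hsp.of_dvd (FiniteField.X_pow_card_sub_X_ne_zero F hc) hdvd
  have h3 := hs2.eq_prod_roots_of_monic hm
  have hnd : (X ^ f - C p : F[X]).roots.Nodup := nodup_roots (separable_X_pow_sub_C p hf0 hp0)
  have hfil : Finset.univ.filter (fun y : F => y ^ f = p) = (X ^ f - C p : F[X]).roots.toFinset := by
    ext y
    simp [hm.ne_zero, sub_eq_zero]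
  conv_rhs => rw [h3]
  rw [hfil, Finset.prod_eq_multiset_prod, Multiset.toFinset_val, hnd.dedup]

open Polynomial in
lemma fiber_card {F : Type*} [Field F] [Fintype F] [DecidableEq F] (e f : ℕ)
    (hef : e * f = Fintype.card F - 1) (p : F) (hp : p ^ e = 1) :
    (Finset.univ.filter (fun y : F => y ^ f = p)).card = f := by
  have h := congrArg natDegree (fiber_prod e f hef p hp)
  rwa [natDegree_X_pow_sub_C, natDegree_prod_of_monic _ _ (fun i _ => monic_X_sub_C _),
    Finset.sum_congr rfl (fun i _ => natDegree_X_sub_C i), Finset.sum_const, smul_eq_mul,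
    mul_one] at h

open Polynomial in
lemma fibers_prod {F : Type*} [Field F] [Fintype F] [DecidableEq F] (e f : ℕ)
    (hef : e * f = Fintype.card F - 1) (P : Finset F) (hP : ∀ p ∈ P, p ^ e = 1) :
    ∏ y ∈ Finset.univ.filter (fun y : F => y ^ f ∈ P), (X - C y) = ∏ p ∈ P, (X ^ f - C p) := by
  rw [← Finset.prod_fiberwise_of_maps_to (g := fun y : F => y ^ f) (t := P)
    (fun y hy => (Finset.mem_filter.1 hy).2)]
  refine Finset.prod_congr rfl fun p hp => ?_
  rw [← fiber_prod e f hef p (hP p hp)]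
  refine Finset.prod_congr ?_ fun _ _ => rfl
  ext y
  simp only [Finset.mem_filter, Finset.mem_univ, true_and]
  constructor
  · exact fun h => h.2
  · rintro rfl; exact ⟨hp, rfl⟩

lemma fibers_card {F : Type*} [Field F] [Fintype F] [DecidableEq F] (e f : ℕ)
    (hef : e * f = Fintype.card F - 1) (P : Finset F) (hP : ∀ p ∈ P, p ^ e = 1) :
    (Finset.univ.filter (fun y : F => y ^ f ∈ P)).card = P.card * f := by
  rw [Finset.card_eq_sum_card_fiberwise (s := Finset.univ.filter (fun y : F => y ^ f ∈ P))
    (f := fun y : F => y ^ f) (t := P)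
    (fun y hy => (Finset.mem_filter.1 (Finset.mem_coe.1 hy)).2)]
  refine Finset.sum_const_nat fun p hp => ?_
  refine Eq.trans ?_ (fiber_card e f hef p (hP p hp))
  congr 1
  ext y
  simp only [Finset.mem_filter, Finset.mem_univ, true_and]
  constructor
  · exact fun h => h.2
  · rintro rfl; exact ⟨hp, rfl⟩

open Polynomial in
lemma der_eval {F : Type*} [Field F] [DecidableEq F] (f : ℕ) (P : Finset F) (x : F)
    (hx : x ^ f ∈ P) :
    (derivative (∏ p ∈ P, (X ^ f - C p))).eval x =
      f * x ^ (f - 1) * ∏ p ∈ P.erase (x ^ f), (x ^ f - p) := by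
  rw [← Finset.mul_prod_erase P _ hx, derivative_mul]
  simp [eval_prod, derivative_X_pow, -map_pow]

lemma diff_pow {F : Type*} [Field F] (r N : ℕ) (hr : 1 ≤ r) 
    (hfrob : ∀ x y : F, (x - y) ^ r = x ^ r - y ^ r) (w z : F) (hw : w ^ (r + 1) = 1)
    (hz : z ^ (r + 1) = 1) (hwz : w ≠ z) :
    (w - z) ^ ((r - 1) * N) * (w ^ N * z ^ N) = (-1) ^ N := by
  have hu : w - z ≠ 0 := sub_ne_zero.2 hwz
  have h1 : (w - z) ^ (r - 1) * (w * z) = -1 := by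
    apply mul_right_cancel₀ hu
    calc (w - z) ^ (r - 1) * (w * z) * (w - z) = (w - z) ^ (r - 1 + 1) * (w * z) := by ring
      _ = w ^ (r + 1) * z - z ^ (r + 1) * w := by
        rw [Nat.sub_add_cancel hr, hfrob]; ring
      _ = -1 * (w - z) := by rw [hw, hz]; ring
  rw [pow_mul, ← mul_pow, ← mul_pow, h1]

open Polynomial in
lemma core {F : Type*} [Field F] [Fintype F] [DecidableEq F] (hchar : ringChar F ≠ 2)
    (r N g D1 D2 f1 f2 L m c s t : ℕ) (hcard : Fintype.card F = r ^ 2) (hr : 1 < r)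
    (hN : r + 1 = 2 * N) (hD1odd : Odd D1)
    (hL1 : L = f1 * D1) (hL2 : L = f2 * D2) (hgL : r ^ 2 - 1 = 4 * g * L)
    (hm : N = D2 * m) (hc : r - 1 = D1 * (2 * c))
    (hfrob : ∀ x y : F, (x - y) ^ r = x ^ r - y ^ r) (hnat : ∀ k : ℕ, (k : F) ^ r = k)
    (hs1 : 1 ≤ s) (hs : s ≤ D1) (ht1 : 1 ≤ t) (ht : t ≤ D2) (hpar : Even (t * m + N))
    (hn : Even (s * f1 + t * f2)) :
    ∃ C : Submodule F (Fin (s * f1 + t * f2) → F),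
      dualCode C = C ∧ Module.finrank F C = (s * f1 + t * f2) / 2 ∧
      IsMinDist C ((s * f1 + t * f2) / 2 + 1) := by
  classical
  have hne1 : (-1 : F) ≠ 1 := Ring.neg_one_ne_one_of_char_ne_two hchar
  have hrr : r ^ 2 - 1 = 2 * ((r - 1) * N) := by
    obtain ⟨r', rfl⟩ : ∃ r', r = r' + 1 := ⟨r - 1, by omega⟩
    have : (r' + 1) ^ 2 - 1 = r' * (r' + 1 + 1) := by
      have : (r' + 1) ^ 2 = r' * (r' + 1 + 1) + 1 := by ring
      omega
    rw [this, hN, Nat.add_sub_cancel]; ring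
  have hq0 : 0 < r ^ 2 - 1 := by
    have : 1 < r ^ 2 := Nat.one_lt_pow (by norm_num) hr
    omega
  have hh : Fintype.card F / 2 = (r - 1) * N := by
    rw [hcard]
    have : r ^ 2 = 2 * ((r - 1) * N) + 1 := by omega
    omega
  have hhL : (r - 1) * N = L * (2 * g) := by
    have : 2 * ((r - 1) * N) = 2 * (L * (2 * g)) := by rw [← hrr, hgL]; ring
    omega
  have hL0 : 0 < L := by
    rcases Nat.eq_zero_or_pos L with h | h
    · rw [h] at hgL; omega
    · exact h
  have hf1 : f1 ≠ 0 := by rintro rfl; omega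
  have hf2 : f2 ≠ 0 := by rintro rfl; omega
  have hD10 : D1 ≠ 0 := by omega
  have hD20 : D2 ≠ 0 := by omega
  have hq1 : (4 * g * D1) * f1 = Fintype.card F - 1 := by rw [hcard, hgL, hL1]; ring
  have hq2 : (4 * g * D2) * f2 = Fintype.card F - 1 := by rw [hcard, hgL, hL2]; ring
  obtain ⟨P, hPsub, hPc⟩ := Finset.exists_subset_card_eq
    (s := Finset.univ.filter (fun y : F => y ^ D1 = 1)) (n := s) (by
      rw [fiber_card (4 * g * f1) D1 (by rw [← hq1]; ring) 1 (one_pow _)]; exact hs)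
  obtain ⟨Q, hQsub, hQc⟩ := Finset.exists_subset_card_eq
    (s := Finset.univ.filter (fun y : F => y ^ D2 = -1)) (n := t) (by
      rw [fiber_card (4 * g * f2) D2 (by rw [← hq2]; ring) (-1)
        (Even.neg_one_pow ⟨2 * g * f2, by ring⟩)]; exact ht)
  have hP : ∀ p ∈ P, p ^ D1 = 1 := fun p hp => (Finset.mem_filter.1 (hPsub hp)).2
  have hQ : ∀ z ∈ Q, z ^ D2 = -1 := fun p hp => (Finset.mem_filter.1 (hQsub hp)).2
  have hPe : ∀ p ∈ P, p ^ (4 * g * D1) = 1 := by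
    intro p hp
    rw [mul_comm, pow_mul, hP p hp, one_pow]
  have hQe : ∀ p ∈ Q, p ^ (4 * g * D2) = 1 := by
    intro p hp
    rw [mul_comm, pow_mul, hQ p hp]
    exact Even.neg_one_pow ⟨2 * g, by ring⟩
  set A := Finset.univ.filter (fun y : F => y ^ f1 ∈ P) with hA
  set B := Finset.univ.filter (fun y : F => y ^ f2 ∈ Q) with hB
  have hAL : ∀ x ∈ A, x ^ L = 1 := by
    intro x hx
    rw [hL1, pow_mul]
    exact hP _ (Finset.mem_filter.1 hx).2
  have hBL : ∀ x ∈ B, x ^ L = -1 := by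
    intro x hx
    rw [hL2, pow_mul]
    exact hQ _ (Finset.mem_filter.1 hx).2
  have hdisj : Disjoint A B := by
    rw [Finset.disjoint_left]
    intro x hxA hxB
    exact hne1 (by rw [← hBL x hxB, hAL x hxA])
  have hcardS : (A ∪ B).card = s * f1 + t * f2 := by
    rw [Finset.card_union_of_disjoint hdisj, fibers_card _ _ hq1 P hPe,
      fibers_card _ _ hq2 Q hQe, hPc, hQc]
  -- powers
  have hAh : ∀ x ∈ A, x ^ ((r - 1) * N) = 1 := by
    intro x hx
    rw [hhL, pow_mul, hAL x hx, one_pow]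
  have hBh : ∀ x ∈ B, x ^ ((r - 1) * N) = 1 := by
    intro x hx
    rw [hhL, pow_mul, hBL x hx]
    exact Even.neg_one_pow ⟨g, by ring⟩
  have hfix : ∀ x : F, x ≠ 0 → x ^ r = x → x ^ ((r - 1) * N) = 1 := by
    intro x hx0 hx
    have : x ^ (r - 1) = 1 := by
      apply mul_right_cancel₀ hx0
      rw [← pow_succ, Nat.sub_add_cancel hr.le, hx, one_mul]
    rw [pow_mul, this, one_pow]
  have hnz : ∀ e f : ℕ, e * f = Fintype.card F - 1 → (f : F) ≠ 0 := by
    intro e f hef h0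
    have h1 : ((e * f + 1 : ℕ) : F) = 0 := by
      rw [hef, Nat.sub_add_cancel Fintype.one_lt_card.le]; exact FiniteField.cast_card_eq_zero F
    push_cast at h1
    rw [h0] at h1
    simp at h1
  have hfix1 : ∀ w : F, w ^ (2 * D1) = 1 → w ^ r = w := by
    intro w hw
    have : w ^ (r - 1) = 1 := by
      rw [hc, show D1 * (2 * c) = 2 * D1 * c by ring, pow_mul, hw, one_pow]
    calc w ^ r = w ^ (r - 1) * w := by rw [← pow_succ, Nat.sub_add_cancel hr.le]
      _ = w := by rw [this, one_mul]
  have hP2 : ∀ p ∈ P, p ^ (2 * D1) = 1 := by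
    intro p hp
    rw [mul_comm, pow_mul, hP p hp, one_pow]
  have hdiff1 : ∀ w : F, w ^ (2 * D1) = 1 → ∀ p ∈ P, w ≠ p → (w - p) ^ ((r - 1) * N) = 1 := by
    intro w hw p hp hwp
    refine hfix _ (sub_ne_zero.2 hwp) ?_
    rw [hfrob, hfix1 w hw, hfix1 p (hP2 p hp)]
  have hQr : ∀ z ∈ Q, z ^ (r + 1) = 1 := by
    intro z hz
    rw [hN, hm, show 2 * (D2 * m) = D2 * (2 * m) by ring, pow_mul, hQ z hz]
    exact Even.neg_one_pow ⟨m, by ring⟩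
  have hQN : ∀ z ∈ Q, z ^ N = (-1) ^ m := by
    intro z hz
    rw [hm, pow_mul, hQ z hz]
  have hsq1 : ∀ k : ℕ, ((-1 : F) ^ k) * (-1) ^ k = 1 := by
    intro k
    rw [← mul_pow]; simp
  have hnodal : ∏ y ∈ A ∪ B, (X - C y) = (∏ p ∈ P, (X ^ f1 - C p)) * ∏ p ∈ Q, (X ^ f2 - C p) := by
    rw [Finset.prod_union hdisj, fibers_prod _ _ hq1 P hPe, fibers_prod _ _ hq2 Q hQe]
  refine grs_finset hchar _ (by positivity) hn (A ∪ B) hcardS ((-1) ^ ((N + m) * t)) ?_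
  intro x hx
  rw [hh, hnodal, derivative_mul, eval_add, eval_mul, eval_mul]
  rcases Finset.mem_union.1 hx with hxA | hxB
  · have hxP : x ^ f1 ∈ P := (Finset.mem_filter.1 hxA).2
    have h0 : (∏ p ∈ P, (X ^ f1 - C p) : F[X]).eval x = 0 := by
      rw [eval_prod]
      exact Finset.prod_eq_zero hxP (by simp)
    have hw : (x ^ f2) ^ D2 = 1 := by rw [← pow_mul, ← hL2, hAL x hxA]
    have hB1 : ((∏ p ∈ Q, (X ^ f2 - C p) : F[X]).eval x) ^ ((r - 1) * N) =
        (-1) ^ ((N + m) * t) := by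
      rw [eval_prod, ← Finset.prod_pow, pow_mul, ← hQc]
      refine Finset.prod_eq_pow_card fun z hz => ?_
      simp only [eval_sub, eval_pow, eval_X, eval_C]
      have h1 := diff_pow r N hr.le hfrob (x ^ f2) z
        (by rw [hN, hm, show 2 * (D2 * m) = D2 * (2 * m) by ring, pow_mul, hw, one_pow])
        (hQr z hz) (by
          intro h
          apply hne1
          rw [← hQ z hz, ← h, hw])
      rw [hQN z hz] at h1
      have h2 : (x ^ f2) ^ N = 1 := by rw [hm, pow_mul, hw, one_pow]
      rw [h2, one_mul] at h1
      rw [pow_add, ← h1, mul_assoc, hsq1, mul_one]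
    rw [h0, zero_mul, add_zero, mul_pow, hB1, der_eval _ _ _ hxP, mul_pow, mul_pow,
      hfix _ (hnz _ _ hq1) (hnat _), ← pow_mul, mul_comm (f1 - 1), pow_mul, hAh x hxA, one_pow,
      ← Finset.prod_pow, Finset.prod_eq_one]
    · simp
    · intro p hp
      exact hdiff1 _ (hP2 _ hxP) p (Finset.mem_of_mem_erase hp) (Finset.ne_of_mem_erase hp).symm
  · have hxQ : x ^ f2 ∈ Q := (Finset.mem_filter.1 hxB).2
    have h0 : (∏ p ∈ Q, (X ^ f2 - C p) : F[X]).eval x = 0 := by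
      rw [eval_prod]
      exact Finset.prod_eq_zero hxQ (by simp)
    have hw : (x ^ f1) ^ D1 = -1 := by rw [← pow_mul, ← hL1, hBL x hxB]
    have hA1 : ((∏ p ∈ P, (X ^ f1 - C p) : F[X]).eval x) ^ ((r - 1) * N) = 1 := by
      rw [eval_prod, ← Finset.prod_pow]
      refine Finset.prod_eq_one fun p hp => ?_
      simp only [eval_sub, eval_pow, eval_X, eval_C]
      refine hdiff1 _ ?_ p hp ?_
      · rw [mul_comm, pow_mul, hw]; simp
      · intro h
        apply hne1
        rw [← hw, h, hP p hp]
    have hQ1 : ∏ z ∈ Q.erase (x ^ f2), (x ^ f2 - z) ^ ((r - 1) * N) = ((-1) ^ N) ^ (t - 1) := by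
      rw [← hQc, ← Finset.card_erase_of_mem hxQ]
      refine Finset.prod_eq_pow_card fun z hz => ?_
      have hz1 := Finset.mem_of_mem_erase hz
      have h1 := diff_pow r N hr.le hfrob (x ^ f2) z (hQr _ hxQ) (hQr z hz1)
        (Finset.ne_of_mem_erase hz).symm
      rwa [hQN z hz1, hQN _ hxQ, hsq1, mul_one] at h1
    rw [h0, mul_zero, zero_add, mul_pow, hA1, der_eval _ _ _ hxQ, mul_pow, mul_pow,
      hfix _ (hnz _ _ hq2) (hnat _), ← pow_mul, mul_comm (f2 - 1), pow_mul, hBh x hxB, one_pow,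
      ← Finset.prod_pow, hQ1]
    obtain ⟨t', rfl⟩ : ∃ t', t = t' + 1 := ⟨t - 1, by omega⟩
    rw [show (N + m) * (t' + 1) = N * t' + ((t' + 1) * m + N) by ring, pow_add,
      hpar.neg_one_pow, pow_mul]
    simp

/-- Theorem 3.3(1): if `(r+1)/2·(t·e₁/e₂ + 1)` and `n₁ = s·f₁ + t·f₂` are even, there is a
`q`-ary MDS self-dual code of length `n₁`, where `q = r²`. -/
theorem mds_self_dual_thm3_even_length
    (r e1 f1 e2 f2 s t l : ℕ)
    (hr_odd : Odd r) (hr_pp : IsPrimePow r)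
    (hq1 : r ^ 2 - 1 = e1 * f1) (hq2 : r ^ 2 - 1 = e2 * f2)
    (hl : 2 ≤ l) (he1 : e1 % 2 ^ (l + 1) = 2 ^ l) (he2 : 2 ^ l ∣ e2)
    (hdvd1 : 2 * e2 ∣ e1 * (r + 1)) (hdvd2 : e1 ∣ e2 * (r - 1))
    (hs1 : 1 ≤ s) (hs2 : s ≤ e1 / Nat.gcd e1 e2)
    (ht1 : 1 ≤ t) (ht2 : t ≤ e2 / Nat.gcd e1 e2)
    (heven : Even (t * e1 * (r + 1) / (2 * e2) + (r + 1) / 2))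
    (hn1 : Even (s * f1 + t * f2))
    (F : Type*) [Field F] [Fintype F] [DecidableEq F]
    (hF : Fintype.card F = r ^ 2) :
    ∃ C : Submodule F (Fin (s * f1 + t * f2) → F),
      dualCode C = C ∧
      Module.finrank F C = (s * f1 + t * f2) / 2 ∧
      IsMinDist C ((s * f1 + t * f2) / 2 + 1) := by

  classical
  obtain ⟨p, k, hp, hk, hpk⟩ := hr_pp
  have hp' : p.Prime := hp.nat_prime
  have : Fact p.Prime := ⟨hp'⟩
  have hr0 : (r : F) = 0 := by
    have h := FiniteField.cast_card_eq_zero F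
    rw [hF] at h
    push_cast at h
    exact pow_eq_zero_iff (two_ne_zero) |>.1 h
  have : CharP F p := by
    rw [CharP.charP_iff_prime_eq_zero hp']
    rw [← hpk] at hr0
    push_cast at hr0
    exact (pow_eq_zero_iff hk.ne').1 hr0
  have hp2 : p ≠ 2 := by
    rintro rfl
    rw [← hpk] at hr_odd
    exact (Nat.not_even_iff_odd.2 hr_odd) ((Nat.even_pow.2 ⟨even_two, hk.ne'⟩))
  have hchar : ringChar F ≠ 2 := by rwa [ringChar.eq F p]
  have hr1 : 1 < r := by rw [← hpk]; exact Nat.one_lt_pow hk.ne' hp'.one_lt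
  have hq0 : 0 < r ^ 2 - 1 := by
    have : 1 < r ^ 2 := Nat.one_lt_pow (by norm_num) hr1
    omega
  have hfrob : ∀ x y : F, (x - y) ^ r = x ^ r - y ^ r := by
    intro x y
    rw [← hpk]; exact sub_pow_char_pow x y k
  have hnat : ∀ j : ℕ, (j : F) ^ r = j := by
    intro j
    rw [← hpk, ← iterateFrobenius_def, map_natCast]
  have he1p : 0 < e1 := Nat.pos_of_ne_zero (by rintro rfl; omega)
  have he2p : 0 < e2 := Nat.pos_of_ne_zero (by rintro rfl; omega)
  have hl1 : 2 ^ l ∣ e1 := by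
    have h := Nat.div_add_mod e1 (2 ^ (l + 1))
    rw [he1, pow_succ] at h
    rw [← h]
    exact Dvd.intro (2 * (e1 / (2 ^ l * 2)) + 1) (by ring)
  have hl2 : ¬ 2 ^ (l + 1) ∣ e1 := by
    intro h
    have := Nat.mod_eq_zero_of_dvd h
    have h2 : 0 < 2 ^ l := by positivity
    omega
  have hgl : 2 ^ l ∣ Nat.gcd e1 e2 := Nat.dvd_gcd hl1 he2
  obtain ⟨D1, D2, hcop, hD1, hD2⟩ : ∃ D1 D2, Nat.Coprime D1 D2 ∧ e1 = Nat.gcd e1 e2 * D1 ∧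
      e2 = Nat.gcd e1 e2 * D2 :=
    ⟨e1 / Nat.gcd e1 e2, e2 / Nat.gcd e1 e2,
      Nat.coprime_div_gcd_div_gcd (Nat.gcd_pos_of_pos_left _ he1p),
      (Nat.mul_div_cancel' (Nat.gcd_dvd_left _ _)).symm,
      (Nat.mul_div_cancel' (Nat.gcd_dvd_right _ _)).symm⟩
  have hg0 : 0 < Nat.gcd e1 e2 := Nat.gcd_pos_of_pos_left _ he1p
  generalize Nat.gcd e1 e2 = G at *
  have h4 : 4 ∣ G := (pow_dvd_pow 2 hl).trans hgl
  obtain ⟨g, rfl⟩ := h4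
  have hD1odd : Odd D1 := by
    rw [← Nat.not_even_iff_odd]
    rintro ⟨d, hd⟩
    apply hl2
    rw [hD1, pow_succ]
    exact mul_dvd_mul hgl ⟨d, by omega⟩
  have hs2' : s ≤ D1 := by rwa [hD1, Nat.mul_div_cancel_left _ hg0] at hs2
  have ht2' : t ≤ D2 := by rwa [hD2, Nat.mul_div_cancel_left _ hg0] at ht2
  obtain ⟨N, hN⟩ : ∃ N, r + 1 = 2 * N := by
    obtain ⟨a, ha⟩ := hr_odd
    exact ⟨a + 1, by omega⟩
  have hND : D2 ∣ N := by
    have h1 : (2 * (4 * g)) * D2 ∣ (2 * (4 * g)) * (D1 * N) := by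
      convert hdvd1 using 1
      · rw [hD2]; ring
      · rw [hD1, hN]; ring
    exact hcop.symm.dvd_of_dvd_mul_left (Nat.dvd_of_mul_dvd_mul_left (by omega) h1)
  obtain ⟨m, hm⟩ := hND
  have hrD : D1 ∣ r - 1 := by
    have h1 : (4 * g) * D1 ∣ (4 * g) * (D2 * (r - 1)) := by
      convert hdvd2 using 1
      · rw [hD1]
      · rw [hD2]; ring
    exact hcop.dvd_of_dvd_mul_left (Nat.dvd_of_mul_dvd_mul_left hg0 h1)
  obtain ⟨c, hc⟩ : ∃ c, r - 1 = D1 * (2 * c) := by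
    obtain ⟨b, hb⟩ := hrD
    have hbe : Even (D1 * b) := by
      rw [← hb]
      obtain ⟨a, ha⟩ := hr_odd
      exact ⟨a, by omega⟩
    rw [Nat.even_mul] at hbe
    rcases hbe with h | ⟨c, h⟩
    · exact absurd h (Nat.not_even_iff_odd.2 hD1odd)
    · exact ⟨c, by rw [hb, h]; ring⟩
  have hLL : f1 * D1 = f2 * D2 := by
    apply Nat.eq_of_mul_eq_mul_left hg0
    calc 4 * g * (f1 * D1) = (4 * g * D1) * f1 := by ring
      _ = (4 * g * D2) * f2 := by rw [← hD1, ← hD2, ← hq1, ← hq2]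
      _ = _ := by ring
  have hdiv : t * e1 * (r + 1) / (2 * e2) = t * D1 * m := by
    refine Nat.div_eq_of_eq_mul_left (by omega) ?_
    rw [hD1, hD2, hN, hm]; ring
  have hN2 : (r + 1) / 2 = N := by omega
  rw [hdiv, hN2] at heven
  have hpar : Even (t * m + N) := by
    have := Nat.not_even_iff_odd.2 hD1odd
    simp only [Nat.even_add, Nat.even_mul] at heven ⊢
    tauto
  exact core hchar r N g D1 D2 f1 f2 (f1 * D1) m c s t hF hr1 hN hD1odd rfl hLL
    (by rw [hq1, hD1]; ring) hm hc hfrob hnat hs1 hs2' ht1 ht2' hpar hn1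
end
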